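/- Let (C,W) be a Harish-Chandra pair over a field k of characteristic ≠ 2, and set A = A(C,W). If there exists a non-zero element w ∈ W on which C coacts trivially (i.e. w ↦ w⊗1 under the comodule structure W → W⊗C), then A contains a non-zero odd primitive element. In particular, if C is irreducible and W ≠ 0, then A contains a non-zero odd primitive. -/

import Mathlib

/-!
Think of `A` as the algebra of functions on an affine supergroup `G`. A functional `φ` on `A` gives
the left-invariant operator `D_φ(a) = Σ a₍₁₎ φ(a₍₂₎)`. Elements `u ∈ W*`, pulled back along
`ϖ : A → W`, give odd vector fields `D_u` (`D_ofW_mul`), and functionals `f ∈ C*`, pulled back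
along `π : A → C`, give even operators `D_f`. Let `F n` be the `n`-th power of the ideal generated
by the odd part.

* `A` is finitely generated and supercommutative with `2 ≠ 0`, so some `F n` vanishes
  (`exists_F_eq_bot`).
* The map `e(a) = Σ S(a₍₁₎) po(a₍₂₎)` is a coinvariant projection modulo `F 2`. Applied to lifts of a
  basis of `W` it gives odd elements `y i` which generate the odd part over `A` modulo `F 2` and are
  dual, modulo `F 1`, to the vector fields `D_{u i}` of the dual basis (`isFrame`).
* Consequently an element of `F 1` killed by all `D_{u i}` is zero (`IsFrame.eq_zero`): climbing the
  filtration, its coefficients on the `y i` can be eliminated one at a time.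

Let `w ∈ W` be coacted on trivially. The system `D_u x = u(w)` is solved by an odd `x`, by
successive approximation modulo `F n` (`IsFrame.exists_integral`). The integrability condition is
that the anticommutators `D_u D_v + D_v D_u = D_{[u,v]}` kill approximate solutions to the current
order (`D_D_add_D_D_mem`); this holds because `[u,v]` is primitive, hence kills `1`, and because
commuting `D_u` past `D_f` produces the matrix coefficients of `W`, which collapse on `w`. The same
commutation rule and uniqueness give `D_f x = f(1) x` for `f ∈ C*` (`D_ofC_eq`). Since `D_φ` is left
invariant, every slice of `Δx - 1 ⊗ x - x ⊗ 1` in the first factor lies in `F 1` and is killed by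
all `D_{u i}`, so it vanishes by uniqueness and `x` is primitive (`mem_primitives`). It is non-zero
as some `u(w)` is.

If `C` is irreducible and `W ≠ 0`, take a simple subcomodule `N` of `W`. The space of its matrix
coefficients is a simple subcoalgebra of `C`: it is a sum of images of `N`, so any non-zero
subcoalgebra of it contains a copy of `N` (`exists_intertwiner`) and hence all coefficients of `N`.
It therefore lies in the coradical `k·1`, which means that `C` coacts trivially on `N`
(`HCP.exists_trivial`).
-/

open TensorProduct CategoryTheory

noncomputable section

/-- A Hopf superalgebra over a field `k` (with `char k ≠ 2`), presented as an
algebra together with even/odd projection operators encoding the `ℤ₂`-grading,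
and comultiplication, counit and antipode satisfying the axioms of a
Hopf-algebra object in the symmetric tensor category of super-vector spaces
(the Koszul sign rule being encoded via the odd projections; this encoding is
faithful since `char k ≠ 2`). -/
structure HopfSuperalgebra (k : Type) [Field k] : Type 1 where
  carrier : Type
  [ring : Ring carrier]
  [alg : Algebra k carrier]
  /-- the projection onto the even part -/
  pe : carrier →ₗ[k] carrier
  /-- the projection onto the odd part -/
  po : carrier →ₗ[k] carrier
  pe_add_po : ∀ a, pe a + po a = a
  pe_po : ∀ a, pe (po a) = 0
  po_pe : ∀ a, po (pe a) = 0
  mul_even_even : ∀ a b, po a = 0 → po b = 0 → po (a * b) = 0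
  mul_even_odd : ∀ a b, po a = 0 → pe b = 0 → pe (a * b) = 0
  mul_odd_even : ∀ a b, pe a = 0 → po b = 0 → pe (a * b) = 0
  mul_odd_odd : ∀ a b, pe a = 0 → pe b = 0 → po (a * b) = 0
  one_even : po 1 = 0
  comul : carrier →ₗ[k] carrier ⊗[k] carrier
  counit : carrier →ₗ[k] k
  antipode : carrier →ₗ[k] carrier
  comul_even : ∀ a, po a = 0 →
    comul a = TensorProduct.map pe pe (comul a) + TensorProduct.map po po (comul a)
  comul_odd : ∀ a, pe a = 0 →
    comul a = TensorProduct.map pe po (comul a) + TensorProduct.map po pe (comul a)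
  counit_odd : ∀ a, pe a = 0 → counit a = 0
  antipode_pe : ∀ a, antipode (pe a) = pe (antipode a)
  coassoc : ∀ a, (TensorProduct.assoc k carrier carrier carrier)
      ((TensorProduct.map comul LinearMap.id) (comul a)) =
      (TensorProduct.map LinearMap.id comul) (comul a)
  counit_comul : ∀ a,
    (TensorProduct.lid k carrier) ((TensorProduct.map counit LinearMap.id) (comul a)) = a
  comul_counit : ∀ a,
    (TensorProduct.rid k carrier) ((TensorProduct.map LinearMap.id counit) (comul a)) = a
  comul_one : comul 1 = 1 ⊗ₜ[k] 1
  /-- `Δ` is an algebra map for the super (sign-twisted) multiplication of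
  `A ⊗ A`: since `(a⊗b)·(c⊗d) = (-1)^{|b||c|} ac ⊗ bd`, the sign twist amounts
  to the correction term `-2·((1⊗po)Δa)·((po⊗1)Δb)`. -/
  comul_mul : ∀ a b, comul (a * b) =
      comul a * comul b -
        (2 : k) • ((TensorProduct.map LinearMap.id po) (comul a) *
          (TensorProduct.map po LinearMap.id) (comul b))
  counit_one : counit 1 = 1
  counit_mul : ∀ a b, counit (a * b) = counit a * counit b
  antipode_comul : ∀ a, (LinearMap.mul' k carrier)
      ((TensorProduct.map antipode LinearMap.id) (comul a)) = algebraMap k carrier (counit a)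
  comul_antipode : ∀ a, (LinearMap.mul' k carrier)
      ((TensorProduct.map LinearMap.id antipode) (comul a)) = algebraMap k carrier (counit a)

attribute [instance] HopfSuperalgebra.ring HopfSuperalgebra.alg

namespace HopfSuperalgebra

variable {k : Type} [Field k] (H : HopfSuperalgebra k)

/-- super-commutativity: even elements are central, odd elements anticommute. -/
def IsSuperCommutative : Prop :=
  (∀ a b : H.carrier, H.po a = 0 → a * b = b * a) ∧
  (∀ a b : H.carrier, H.pe a = 0 → H.pe b = 0 → a * b = -(b * a))

/-- the super-symmetry `c(v ⊗ w) = (-1)^{|v||w|} w ⊗ v` on `H ⊗ H`. -/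
def superSwap : H.carrier ⊗[k] H.carrier →ₗ[k] H.carrier ⊗[k] H.carrier :=
  (TensorProduct.comm k H.carrier H.carrier).toLinearMap ∘ₗ
    (LinearMap.id - (2 : k) • TensorProduct.map H.po H.po)

def IsSuperCocommutative : Prop := ∀ a, H.superSwap (H.comul a) = H.comul a

/-- the primitive elements `{u | Δu = 1⊗u + u⊗1}`. -/
def primitives : Submodule k H.carrier :=
  LinearMap.ker (H.comul -
    ((TensorProduct.mk k H.carrier H.carrier) 1 +
      (TensorProduct.mk k H.carrier H.carrier).flip 1))

def IsPurelyEven : Prop := ∀ a, H.po a = 0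

/-- the convolution product of two linear functionals on `H`. -/
def conv (f g : H.carrier →ₗ[k] k) : H.carrier →ₗ[k] k :=
  LinearMap.mul' k k ∘ₗ TensorProduct.map f g ∘ₗ H.comul

/-- the largest purely even subcoalgebra `H̲ = Δ⁻¹(H₀ ⊗ H₀)`. -/
def underline : Submodule k H.carrier :=
  Submodule.comap H.comul (LinearMap.range
    (TensorProduct.map (LinearMap.ker H.po).subtype (LinearMap.ker H.po).subtype))

/-- the odd primitives `V_H = P(H)₁`. -/
def oddPrimitives : Submodule k H.carrier := H.primitives ⊓ LinearMap.ker H.pe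

end HopfSuperalgebra

/-- A subspace `D` of a coalgebra with comultiplication `Δ` is a subcoalgebra
if `Δ(D) ⊆ D ⊗ D`. -/
def IsSubcoalgebraOf {k M : Type} [Field k] [AddCommGroup M] [Module k M]
    (Δ : M →ₗ[k] M ⊗[k] M) (D : Submodule k M) : Prop :=
  ∀ a ∈ D, Δ a ∈ LinearMap.range (TensorProduct.map D.subtype D.subtype)

/-- The coradical of a coalgebra: the sum of all its simple subcoalgebras. -/
def coradicalOf {k M : Type} [Field k] [AddCommGroup M] [Module k M]
    (Δ : M →ₗ[k] M ⊗[k] M) : Submodule k M :=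
  sSup {D | IsSubcoalgebraOf Δ D ∧ D ≠ ⊥ ∧
    ∀ E : Submodule k M, E ≤ D → IsSubcoalgebraOf Δ E → E = ⊥ ∨ E = D}

namespace HopfSuperalgebra

variable {k : Type} [Field k] (H : HopfSuperalgebra k)

/-- a Hopf superalgebra is irreducible if its coradical is `k·1`. -/
def IsIrreducible : Prop := coradicalOf H.comul = Submodule.span k {(1 : H.carrier)}

/-- cosemisimplicity: the coradical is everything; equivalently all
super-comodules are semisimple, i.e. `SSp H` is linearly reductive. -/
def IsCosemisimple : Prop := coradicalOf H.comul = (⊤ : Submodule k H.carrier)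

/-- connectedness of `Spec A₀`: the only even idempotents are `0` and `1`. -/
def IsConnected : Prop :=
  ∀ a : H.carrier, H.po a = 0 → a * a = a → a = 0 ∨ a = 1

/-- Morphisms of Hopf superalgebras. -/
@[ext]
structure Hom (H K : HopfSuperalgebra k) : Type where
  toLinearMap : H.carrier →ₗ[k] K.carrier
  map_one' : toLinearMap 1 = 1
  map_mul' : ∀ a b, toLinearMap (a * b) = toLinearMap a * toLinearMap b
  map_pe' : ∀ a, toLinearMap (H.pe a) = K.pe (toLinearMap a)
  map_comul' : ∀ a, K.comul (toLinearMap a) =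
    TensorProduct.map toLinearMap toLinearMap (H.comul a)
  map_counit' : ∀ a, K.counit (toLinearMap a) = H.counit a

instance : Category (HopfSuperalgebra k) where
  Hom A B := Hom A B
  id A :=
    { toLinearMap := LinearMap.id
      map_one' := rfl
      map_mul' := fun _ _ => rfl
      map_pe' := fun _ => rfl
      map_comul' := fun a => by simp
      map_counit' := fun _ => rfl }
  comp {X Y Z} f g :=
    { toLinearMap := g.toLinearMap ∘ₗ f.toLinearMap
      map_one' := by simp [f.map_one', g.map_one']
      map_mul' := fun a b => by simp [f.map_mul', g.map_mul']
      map_pe' := fun a => by simp [f.map_pe', g.map_pe']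
      map_comul' := fun a => by
        simp only [LinearMap.coe_comp, Function.comp_apply, g.map_comul', f.map_comul',
          TensorProduct.map_comp, LinearMap.comp_apply]
      map_counit' := fun a => by simp [f.map_counit', g.map_counit'] }
  id_comp f := by apply Hom.ext; rfl
  comp_id f := by apply Hom.ext; rfl
  assoc f g h := by apply Hom.ext; rfl

end HopfSuperalgebra

section HCPsec

variable {k : Type} [Field k]

/-- the transpose of a right `C`-coaction on `W`: the right action
`(v ◁ f)(w) = Σ v(w₍₀₎) f(w₍₁₎)` of a functional `f` on `W*`. -/
def tAct {W C : Type} [AddCommGroup W] [Module k W] [AddCommGroup C] [Module k C]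
    (coact : W →ₗ[k] W ⊗[k] C) (v : W →ₗ[k] k) (f : C →ₗ[k] k) : W →ₗ[k] k :=
  LinearMap.mul' k k ∘ₗ TensorProduct.map v f ∘ₗ coact

/-- A Harish-Chandra pair: an affine (finitely generated commutative) Hopf
algebra `C`, a finite-dimensional right `C`-comodule `W`, and a bracket
`W* × W* → P(C°)` with values in the `ε`-derivations (= primitives of the dual
Hopf algebra `C°`), making `(C°, W*)` a dual Harish-Chandra pair.  The
conditions involving the coalgebra structure of `C°` are stated via arbitrary
finite representations of the relevant comultiplications. -/
structure HCP (k : Type) [Field k] : Type 1 where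
  C : Type
  [crC : CommRing C]
  [hopfC : HopfAlgebra k C]
  fgC : Algebra.FiniteType k C
  W : Type
  [acgW : AddCommGroup W]
  [modW : Module k W]
  fdW : FiniteDimensional k W
  coact : W →ₗ[k] W ⊗[k] C
  coact_counit : ∀ w, (TensorProduct.rid k W)
    ((TensorProduct.map LinearMap.id (Coalgebra.counit (R := k))) (coact w)) = w
  coact_coassoc : ∀ w,
    (TensorProduct.assoc k W C C) ((TensorProduct.map coact LinearMap.id) (coact w)) =
    (TensorProduct.map LinearMap.id (Coalgebra.comul (R := k))) (coact w)
  bracket : (W →ₗ[k] k) →ₗ[k] (W →ₗ[k] k) →ₗ[k] (C →ₗ[k] k)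
  /-- the bracket takes values in the primitives of `C°`, i.e. `ε`-derivations. -/
  bracket_der : ∀ u v (a b : C),
    bracket u v (a * b) = bracket u v a * Coalgebra.counit (R := k) b +
      Coalgebra.counit (R := k) a * bracket u v b
  /-- condition (b). -/
  bracket_symm : ∀ u v, bracket u v = bracket v u
  /-- condition (c). -/
  act_bracket_self : ∀ v : W →ₗ[k] k, tAct coact v (bracket v v) = 0
  /-- condition (a) for `(C°, W*)`, stated for arbitrary finite representations
  `Δ°f = Σᵢ gᵢ ⊗ hᵢ` (i.e. `f(xy) = Σᵢ gᵢ(x)hᵢ(y)`) and `Δ²c = Σⱼ pⱼ⊗qⱼ⊗rⱼ`: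
  `Σ [u◁f₍₁₎, v◁f₍₂₎] = Σ S°(f₍₁₎)·[u,v]·f₍₂₎` in `C°`. -/
  equivariance : ∀ (u v : W →ₗ[k] k) (f : C →ₗ[k] k) (n : ℕ)
      (g h : Fin n → (C →ₗ[k] k)),
    (∀ x y : C, f (x * y) = ∑ i, g i x * h i y) →
    ∀ (c : C) (m : ℕ) (p q r : Fin m → C),
      ((TensorProduct.map LinearMap.id (Coalgebra.comul (R := k)))
        (Coalgebra.comul (R := k) c) = ∑ j, p j ⊗ₜ[k] (q j ⊗ₜ[k] r j)) →
      (∑ i, bracket (tAct coact u (g i)) (tAct coact v (h i))) c =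
      ∑ j, f (HopfAlgebra.antipode (R := k) (p j) * r j) * bracket u v (q j)

attribute [instance] HCP.crC HCP.hopfC HCP.acgW HCP.modW

namespace HCP

/-- morphisms of Harish-Chandra pairs: a Hopf algebra map and a linear map
whose duals give a morphism of the associated dual Harish-Chandra pairs. -/
@[ext]
structure Hom (P Q : HCP k) : Type where
  fC : P.C →ₗ[k] Q.C
  gW : P.W →ₗ[k] Q.W
  fC_one : fC 1 = 1
  fC_mul : ∀ a b, fC (a * b) = fC a * fC b
  fC_comul : ∀ a, Coalgebra.comul (R := k) (fC a) =
    TensorProduct.map fC fC (Coalgebra.comul (R := k) a)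
  fC_counit : ∀ a, Coalgebra.counit (R := k) (fC a) = Coalgebra.counit (R := k) a
  act_compat : ∀ (v : Q.W →ₗ[k] k) (f : Q.C →ₗ[k] k),
    (tAct Q.coact v f) ∘ₗ gW = tAct P.coact (v ∘ₗ gW) (f ∘ₗ fC)
  bracket_compat : ∀ u v : Q.W →ₗ[k] k,
    (Q.bracket u v) ∘ₗ fC = P.bracket (u ∘ₗ gW) (v ∘ₗ gW)

instance : Category (HCP k) where
  Hom P Q := Hom P Q
  id P :=
    { fC := LinearMap.id
      gW := LinearMap.id
      fC_one := rfl
      fC_mul := fun _ _ => rfl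
      fC_comul := fun a => by simp
      fC_counit := fun _ => rfl
      act_compat := fun v f => rfl
      bracket_compat := fun u v => rfl }
  comp {X Y Z} f g :=
    { fC := g.fC ∘ₗ f.fC
      gW := g.gW ∘ₗ f.gW
      fC_one := by simp [f.fC_one, g.fC_one]
      fC_mul := fun a b => by simp [f.fC_mul, g.fC_mul]
      fC_comul := fun a => by
        simp only [LinearMap.coe_comp, Function.comp_apply, g.fC_comul, f.fC_comul,
          TensorProduct.map_comp, LinearMap.comp_apply]
      fC_counit := fun a => by simp [f.fC_counit, g.fC_counit]
      act_compat := fun v h => by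
        rw [← LinearMap.comp_assoc, g.act_compat, f.act_compat, LinearMap.comp_assoc,
          LinearMap.comp_assoc]
      bracket_compat := fun u v => by
        rw [← LinearMap.comp_assoc, g.bracket_compat, f.bracket_compat, LinearMap.comp_assoc,
          LinearMap.comp_assoc] }
  id_comp f := by apply Hom.ext <;> rfl
  comp_id f := by apply Hom.ext <;> rfl
  assoc f g h := by apply Hom.ext <;> rfl

end HCP

namespace HopfSuperalgebra

variable (A : HopfSuperalgebra k)

/-- the right adjoint coaction `a ↦ Σ a₍₂₎ ⊗ S(a₍₁₎)a₍₃₎`. -/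
def adjCoact : A.carrier →ₗ[k] A.carrier ⊗[k] A.carrier :=
  TensorProduct.map LinearMap.id
      (LinearMap.mul' k A.carrier ∘ₗ TensorProduct.map A.antipode LinearMap.id) ∘ₗ
    (TensorProduct.assoc k A.carrier A.carrier A.carrier).toLinearMap ∘ₗ
    (TensorProduct.map (TensorProduct.comm k A.carrier A.carrier).toLinearMap LinearMap.id) ∘ₗ
    (TensorProduct.assoc k A.carrier A.carrier A.carrier).symm.toLinearMap ∘ₗ
    (TensorProduct.map LinearMap.id A.comul) ∘ₗ A.comul

/-- the super-ideal `I_A = A·A₁` generated by the odd part. -/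
def oddIdeal : Submodule k A.carrier :=
  Submodule.span k {x | ∃ a b, A.pe b = 0 ∧ x = a * b}

end HopfSuperalgebra

/-- Data realizing the Harish-Chandra pair `(Ā, W^A)` associated with the
super-commutative Hopf superalgebra `A` as the Harish-Chandra pair `P`:
`π : A → P.C` realizes the quotient Hopf algebra `Ā = A/A·A₁`, `ϖ : A → P.W`
realizes `W^A = (A⁺/(A⁺)²)₁ = A₁/A₀⁺A₁` with the adjoint coaction, and the
bracket of `P` corresponds to the super-commutator (convolution) of odd
primitives of `A°`. -/
structure BarPairData (A : HopfSuperalgebra k) (P : HCP k) : Type where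
  π : A.carrier →ₗ[k] P.C
  ϖ : A.carrier →ₗ[k] P.W
  π_surj : Function.Surjective π
  π_ker : LinearMap.ker π = A.oddIdeal
  π_one : π 1 = 1
  π_mul : ∀ a b, π (a * b) = π a * π b
  π_comul : ∀ a, Coalgebra.comul (R := k) (π a) = TensorProduct.map π π (A.comul a)
  π_counit : ∀ a, Coalgebra.counit (R := k) (π a) = A.counit a
  ϖ_surj : Function.Surjective ϖ
  ϖ_ker : LinearMap.ker ϖ = LinearMap.ker A.po ⊔ Submodule.span k
    {x | ∃ b c, A.po b = 0 ∧ A.counit b = 0 ∧ A.pe c = 0 ∧ x = b * c}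
  ϖ_coact : ∀ a, P.coact (ϖ a) = TensorProduct.map ϖ π (A.adjCoact a)
  bracket_eq : ∀ u v : P.W →ₗ[k] k, (P.bracket u v) ∘ₗ π =
    A.conv (u ∘ₗ ϖ) (v ∘ₗ ϖ) + A.conv (v ∘ₗ ϖ) (u ∘ₗ ϖ)

/-- `A` realizes the affine Hopf superalgebra `A(C,W)` associated with the
Harish-Chandra pair `P`, i.e. `(Ā, W^A) ≅ P`. -/
def RealizesBarPair (A : HopfSuperalgebra k) (P : HCP k) : Prop :=
  Nonempty (BarPairData A P)

end HCPsec

/-! ### Convolution and left-invariant operators -/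

namespace HopfSuperalgebra

variable {k : Type} [Field k] (A : HopfSuperalgebra k)

/-- Convolution of two linear maps from `A` to an algebra `B`. -/
def cv {B : Type} [Ring B] [Algebra k B] (p q : A.carrier →ₗ[k] B) : A.carrier →ₗ[k] B :=
  LinearMap.mul' k B ∘ₗ TensorProduct.map p q ∘ₗ A.comul

/-- The map `a ↦ φ(a)·1_B` attached to a functional `φ`. -/
def sc (B : Type) [Ring B] [Algebra k B] (φ : A.carrier →ₗ[k] k) : A.carrier →ₗ[k] B :=
  Algebra.linearMap k B ∘ₗ φ

/-- `(id ⊗ φ)`, as a map `A ⊗ A → A`. -/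
def slice (φ : A.carrier →ₗ[k] k) : A.carrier ⊗[k] A.carrier →ₗ[k] A.carrier :=
  (TensorProduct.rid k A.carrier).toLinearMap ∘ₗ TensorProduct.map LinearMap.id φ

/-- The left-invariant operator `D_φ(a) = Σ a₍₁₎ φ(a₍₂₎)`. -/
def D (φ : A.carrier →ₗ[k] k) : A.carrier →ₗ[k] A.carrier := A.slice φ ∘ₗ A.comul

@[simp] lemma slice_tmul (φ : A.carrier →ₗ[k] k) (a b : A.carrier) :
    A.slice φ (a ⊗ₜ b) = φ b • a := by simp [slice]

lemma D_apply (φ : A.carrier →ₗ[k] k) (a : A.carrier) : A.D φ a = A.slice φ (A.comul a) := rfl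

lemma D_add (φ ψ : A.carrier →ₗ[k] k) : A.D (φ + ψ) = A.D φ + A.D ψ := by
  unfold D slice
  rw [TensorProduct.map_add_right, LinearMap.comp_add, LinearMap.add_comp]

lemma D_smul (c : k) (φ : A.carrier →ₗ[k] k) : A.D (c • φ) = c • A.D φ := by
  unfold D slice
  rw [TensorProduct.map_smul_right, LinearMap.comp_smul, LinearMap.smul_comp]

lemma D_zero : A.D (0 : A.carrier →ₗ[k] k) = 0 := by
  simpa using A.D_smul 0 0

lemma D_sum {ι : Type} (s : Finset ι) (φ : ι → A.carrier →ₗ[k] k) :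
    A.D (∑ i ∈ s, φ i) = ∑ i ∈ s, A.D (φ i) := by
  classical
  induction s using Finset.induction_on with
  | empty => simp [D_zero]
  | insert i s hi ih => rw [Finset.sum_insert hi, Finset.sum_insert hi, D_add, ih]

lemma D_one (φ : A.carrier →ₗ[k] k) : A.D φ 1 = φ 1 • 1 := by
  rw [D_apply, A.comul_one, slice_tmul]

lemma D_counit : A.D A.counit = LinearMap.id := by
  ext a; exact A.comul_counit a

variable {B : Type} [Ring B] [Algebra k B]

lemma cv_assoc (p q r : A.carrier →ₗ[k] B) : A.cv (A.cv p q) r = A.cv p (A.cv q r) := by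
  have h1 : ∀ z, LinearMap.mul' k B (TensorProduct.map (A.cv p q) r z) = LinearMap.mul' k B
      (TensorProduct.map (LinearMap.mul' k B ∘ₗ TensorProduct.map p q) r
        (TensorProduct.map A.comul LinearMap.id z)) := by
    intro z
    rw [← LinearMap.comp_apply (TensorProduct.map _ _) (TensorProduct.map _ _),
      ← TensorProduct.map_comp]
    rfl
  have h2 : ∀ z, LinearMap.mul' k B (TensorProduct.map p (A.cv q r) z) = LinearMap.mul' k B
      (TensorProduct.map p (LinearMap.mul' k B ∘ₗ TensorProduct.map q r)
        (TensorProduct.map LinearMap.id A.comul z)) := by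
    intro z
    rw [← LinearMap.comp_apply (TensorProduct.map _ _) (TensorProduct.map _ _),
      ← TensorProduct.map_comp]
    rfl
  have h3 : (LinearMap.mul' k B ∘ₗ
      TensorProduct.map (LinearMap.mul' k B ∘ₗ TensorProduct.map p q) r) =
      (LinearMap.mul' k B ∘ₗ
      TensorProduct.map p (LinearMap.mul' k B ∘ₗ TensorProduct.map q r)) ∘ₗ
      (TensorProduct.assoc k A.carrier A.carrier A.carrier).toLinearMap := by
    ext x y z
    simp [mul_assoc]
  ext a
  have h4 := LinearMap.congr_fun h3 (TensorProduct.map A.comul LinearMap.id (A.comul a))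
  simp only [LinearMap.comp_apply, LinearEquiv.coe_coe, A.coassoc a] at h4
  exact (h1 _).trans (h4.trans (h2 _).symm)

lemma comp_D (p : A.carrier →ₗ[k] B) (φ : A.carrier →ₗ[k] k) :
    p ∘ₗ A.D φ = A.cv p (A.sc B φ) := by
  have : p ∘ₗ A.slice φ = LinearMap.mul' k B ∘ₗ TensorProduct.map p (A.sc B φ) := by
    ext x y
    simp [sc, Algebra.algebraMap_eq_smul_one]
  unfold D cv
  rw [← LinearMap.comp_assoc, this, LinearMap.comp_assoc]

lemma D_eq_cv (φ : A.carrier →ₗ[k] k) : A.D φ = A.cv LinearMap.id (A.sc _ φ) := by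
  rw [← comp_D, LinearMap.id_comp]

lemma sc_conv (φ ψ : A.carrier →ₗ[k] k) :
    A.sc B (A.conv φ ψ) = A.cv (A.sc B φ) (A.sc B ψ) := by
  have : Algebra.linearMap k B ∘ₗ LinearMap.mul' k k ∘ₗ TensorProduct.map φ ψ =
      LinearMap.mul' k B ∘ₗ TensorProduct.map (A.sc B φ) (A.sc B ψ) := by
    ext x y
    simp [sc]
  unfold sc conv cv
  rw [← LinearMap.comp_assoc, ← LinearMap.comp_assoc, LinearMap.comp_assoc _ _ (Algebra.linearMap k B), this]
  rfl

lemma D_comp_D (φ ψ : A.carrier →ₗ[k] k) : A.D φ ∘ₗ A.D ψ = A.D (A.conv φ ψ) := by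
  rw [comp_D, D_eq_cv A φ, cv_assoc, ← sc_conv, ← D_eq_cv]

lemma D_D (φ ψ : A.carrier →ₗ[k] k) (a : A.carrier) : A.D φ (A.D ψ a) = A.D (A.conv φ ψ) a :=
  LinearMap.congr_fun (A.D_comp_D φ ψ) a

lemma sc_counit_cv (p : A.carrier →ₗ[k] B) : A.cv (A.sc B A.counit) p = p := by
  have : LinearMap.mul' k B ∘ₗ TensorProduct.map (A.sc B A.counit) p =
      p ∘ₗ (TensorProduct.lid k A.carrier).toLinearMap ∘ₗ
        TensorProduct.map A.counit LinearMap.id := by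
    ext x y
    simp [sc, Algebra.algebraMap_eq_smul_one]
  unfold cv
  rw [← LinearMap.comp_assoc, this]
  ext a
  simp [A.counit_comul a]

lemma cv_sc_counit (p : A.carrier →ₗ[k] B) : A.cv p (A.sc B A.counit) = p := by
  rw [← comp_D, D_counit, LinearMap.comp_id]

lemma cv_id_antipode : A.cv LinearMap.id A.antipode = A.sc _ A.counit := by
  ext a; exact A.comul_antipode a

lemma cv_antipode_id : A.cv A.antipode LinearMap.id = A.sc _ A.counit := by
  ext a; exact A.antipode_comul a

/-! ### Parity -/

lemma pe_of_odd {a : A.carrier} (h : A.pe a = 0) : A.po a = a := by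
  have := A.pe_add_po a
  rwa [h, zero_add] at this

lemma pe_of_even {a : A.carrier} (h : A.po a = 0) : A.pe a = a := by
  have := A.pe_add_po a
  rwa [h, add_zero] at this

@[simp] lemma po_po (a : A.carrier) : A.po (A.po a) = A.po a := A.pe_of_odd (A.pe_po a)
@[simp] lemma pe_pe (a : A.carrier) : A.pe (A.pe a) = A.pe a := A.pe_of_even (A.po_pe a)
attribute [simp] pe_po po_pe

lemma counit_po (a : A.carrier) : A.counit (A.po a) = 0 := A.counit_odd _ (A.pe_po a)

lemma counit_pe (a : A.carrier) : A.counit (A.pe a) = A.counit a := by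
  conv_rhs => rw [← A.pe_add_po a, map_add, counit_po, add_zero]

lemma pe_eq (a : A.carrier) : A.pe a = a - A.po a := by
  rw [eq_sub_iff_add_eq, A.pe_add_po]

lemma antipode_po (a : A.carrier) : A.antipode (A.po a) = A.po (A.antipode a) := by
  have := A.antipode_pe a
  rw [pe_eq, pe_eq, map_sub] at this
  exact sub_right_injective this

lemma po_mul (a b : A.carrier) : A.po (a * b) = A.pe a * A.po b + A.po a * A.pe b := by
  have h : a * b = A.pe a * A.pe b + A.pe a * A.po b + (A.po a * A.pe b + A.po a * A.po b) := by
    conv_lhs => rw [← A.pe_add_po a, ← A.pe_add_po b]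
    noncomm_ring
  rw [h, map_add, map_add, map_add, A.mul_even_even _ _ (A.po_pe a) (A.po_pe b),
    A.mul_odd_odd _ _ (A.pe_po a) (A.pe_po b),
    A.pe_of_odd (A.mul_even_odd _ _ (A.po_pe a) (A.pe_po b)),
    A.pe_of_odd (A.mul_odd_even _ _ (A.pe_po a) (A.po_pe b))]
  abel

/-- For an odd functional `φ`, the operator `D_φ` is odd. -/
lemma D_odd_po (φ : A.carrier →ₗ[k] k) (hφ : ∀ a, φ (A.pe a) = 0) (a : A.carrier) :
    A.D φ (A.po a) = A.pe (A.D φ a) := by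
  have key : ∀ a, A.pe a = 0 → A.pe (A.D φ a) = A.D φ a := by
    intro a ha
    rw [D_apply, A.comul_odd a ha]
    generalize A.comul a = z
    induction z with
    | zero => simp
    | tmul x y => simp [hφ]
    | add x y hx hy =>
      simp only [map_add] at *
      rw [add_add_add_comm, hx, hy]
      abel
  have key2 : ∀ a, A.po a = 0 → A.pe (A.D φ a) = 0 := by
    intro a ha
    rw [D_apply, A.comul_even a ha]
    generalize A.comul a = z
    induction z with
    | zero => simp
    | tmul x y => simp [hφ]
    | add x y hx hy =>
      simp only [map_add] at *
      rw [add_add_add_comm, hx, hy, add_zero]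
  conv_rhs => rw [← A.pe_add_po a, map_add, map_add, key2 _ (A.po_pe a), zero_add,
    key _ (A.pe_po a)]

/-- For an even functional `φ`, the operator `D_φ` is even. -/
lemma D_even_po (φ : A.carrier →ₗ[k] k) (hφ : ∀ a, φ (A.po a) = 0) (a : A.carrier)
    (ha : A.pe a = 0) : A.pe (A.D φ a) = 0 := by
  rw [D_apply, A.comul_odd a ha]
  generalize A.comul a = z
  induction z with
  | zero => simp
  | tmul x y => simp [hφ]
  | add x y hx hy =>
    simp only [map_add] at *
    rw [add_add_add_comm, hx, hy, add_zero]

lemma slice_mul (φ : A.carrier →ₗ[k] k)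
    (hφ : ∀ a b, φ (a * b) = φ a * A.counit b + A.counit a * φ b)
    (z z' : A.carrier ⊗[k] A.carrier) :
    A.slice φ (z * z') = A.slice φ z * A.slice A.counit z' + A.slice A.counit z * A.slice φ z' := by
  induction z with
  | zero => simp
  | add x y hx hy => simp only [add_mul, map_add, hx, hy]; abel
  | tmul x y =>
    induction z' with
    | zero => simp
    | add x y hx hy => simp only [mul_add, map_add, hx, hy]; abel
    | tmul x' y' =>
      simp [hφ, add_smul, smul_smul, mul_comm]

/-- The twisted Leibniz rule for `D_φ` when `φ` is an `ε`-derivation. -/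
lemma D_mul (φ : A.carrier →ₗ[k] k)
    (hφ : ∀ a b, φ (a * b) = φ a * A.counit b + A.counit a * φ b) (a b : A.carrier) :
    A.D φ (a * b) = A.D φ a * b + a * A.D φ b - (2 : k) • (A.D (φ ∘ₗ A.po) a * A.po b) := by
  have h1 : ∀ z, A.slice φ (TensorProduct.map LinearMap.id A.po z) = A.slice (φ ∘ₗ A.po) z := by
    intro z
    induction z with
    | zero => simp
    | tmul x y => simp
    | add x y hx hy => simp only [map_add, hx, hy]
  have h2 : ∀ z, A.slice A.counit (TensorProduct.map LinearMap.id A.po z) = 0 := by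
    intro z
    induction z with
    | zero => simp
    | tmul x y => simp [counit_po]
    | add x y hx hy => simp only [map_add, hx, hy, add_zero]
  have h3 : ∀ z, A.slice A.counit (TensorProduct.map A.po LinearMap.id z) =
      A.po (A.slice A.counit z) := by
    intro z
    induction z with
    | zero => simp
    | tmul x y => simp
    | add x y hx hy => simp only [map_add, hx, hy]
  have h4 : ∀ c, A.slice A.counit (A.comul c) = c := A.comul_counit
  rw [D_apply, A.comul_mul, map_sub, map_smul, slice_mul A φ hφ, slice_mul A φ hφ, h1, h2, h3,
    h4, h4, zero_mul, add_zero]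
  rfl

end HopfSuperalgebra

/-! ### Powers of the odd ideal and frames of odd vector fields -/

namespace HopfSuperalgebra

variable {k : Type} [Field k] (A : HopfSuperalgebra k)

/-- The odd part of `A`. -/
def O : Submodule k A.carrier := LinearMap.ker A.pe

/-- The powers `F n = A·A₁ⁿ` of the super-ideal generated by the odd part. -/
def F (n : ℕ) : Submodule k A.carrier := ⊤ * A.O ^ n

lemma mem_O {a : A.carrier} : a ∈ A.O ↔ A.pe a = 0 := LinearMap.mem_ker

lemma F_zero : A.F 0 = ⊤ := by
  unfold F
  rw [pow_zero, mul_one]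

lemma mem_F_zero (a : A.carrier) : a ∈ A.F 0 := by rw [F_zero]; trivial

lemma F_succ (n : ℕ) : A.F (n + 1) = A.F n * A.O := by
  unfold F
  rw [pow_succ, mul_assoc]

lemma F_succ_le (n : ℕ) : A.F (n + 1) ≤ A.F n := by
  induction n with
  | zero => rw [F_zero]; exact le_top
  | succ n ih =>
    rw [F_succ A (n + 1)]
    exact (mul_le_mul' ih le_rfl).trans (A.F_succ n).ge

lemma F_anti : Antitone A.F := antitone_nat_of_succ_le A.F_succ_le

lemma O_le_F_one : A.O ≤ A.F 1 := by
  intro a ha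
  rw [F_succ]
  simpa using Submodule.mul_mem_mul (A.mem_F_zero 1) ha

variable {A}

/-- Left and right multiples of a space of odd elements coincide, by supercommutativity. -/
lemma commute_top_span (hA : A.IsSuperCommutative) {Y : Submodule k A.carrier} (hY : Y ≤ A.O) :
    Commute (⊤ : Submodule k A.carrier) Y := by
  have key : ∀ a, ∀ o, A.pe o = 0 → a * o = o * (A.pe a - A.po a) := by
    intro a o ho
    conv_lhs => rw [← A.pe_add_po a]
    rw [add_mul, hA.1 _ o (A.po_pe a), hA.2 _ o (A.pe_po a) ho, mul_sub, sub_eq_add_neg]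
  have key' : ∀ a, ∀ o, A.pe o = 0 → o * a = (A.pe a - A.po a) * o := by
    intro a o ho
    rw [key _ o ho]
    simp [A.pe_add_po]
  apply le_antisymm
  · rw [Submodule.mul_le]
    intro a _ o ho
    rw [key a o (hY ho)]
    exact Submodule.mul_mem_mul ho Submodule.mem_top
  · rw [Submodule.mul_le]
    intro o ho a _
    rw [key' a o (hY ho)]
    exact Submodule.mul_mem_mul Submodule.mem_top ho

lemma top_mul_top : (⊤ : Submodule k A.carrier) * ⊤ = ⊤ :=
  le_antisymm le_top fun a _ => by
    simpa using Submodule.mul_mem_mul (Submodule.mem_top (x := a))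
      (Submodule.mem_top (x := (1 : A.carrier)))

lemma F_mul (hA : A.IsSuperCommutative) (m n : ℕ) : A.F m * A.F n = A.F (m + n) := by
  unfold F
  have h := (commute_top_span hA (le_refl A.O)).pow_right m
  rw [mul_assoc, ← mul_assoc (A.O ^ m), ← h.eq, ← mul_assoc, ← mul_assoc, top_mul_top,
    mul_assoc, pow_add]

lemma mul_mem_F (hA : A.IsSuperCommutative) {m n : ℕ} {a b : A.carrier} (ha : a ∈ A.F m)
    (hb : b ∈ A.F n) : a * b ∈ A.F (m + n) := by
  rw [← F_mul hA]
  exact Submodule.mul_mem_mul ha hb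

lemma mul_odd_mem_F {n : ℕ} {a o : A.carrier} (ha : a ∈ A.F n)
    (ho : A.pe o = 0) : a * o ∈ A.F (n + 1) := by
  rw [F_succ]
  exact Submodule.mul_mem_mul ha ho

lemma mul_mem_F_left (hA : A.IsSuperCommutative) {n : ℕ} (a : A.carrier) {b : A.carrier}
    (hb : b ∈ A.F n) : a * b ∈ A.F n := by
  simpa using mul_mem_F hA (A.mem_F_zero a) hb

lemma mul_mem_F_right (hA : A.IsSuperCommutative) {n : ℕ} {a : A.carrier} (b : A.carrier)
    (ha : a ∈ A.F n) : a * b ∈ A.F n := by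
  simpa using mul_mem_F hA ha (A.mem_F_zero b)

lemma odd_sq (h2 : (2 : k) ≠ 0) (hA : A.IsSuperCommutative) {y : A.carrier} (hy : A.pe y = 0) :
    y * y = 0 := by
  have h := hA.2 y y hy hy
  have h' : (2 : k) • (y * y) = 0 := by
    rw [two_smul]
    nth_rewrite 1 [h]
    simp
  exact (smul_eq_zero.mp h').resolve_left h2

/-- If `A` is finitely generated then the ideal generated by the odd part is nilpotent: it is
generated by the odd parts of finitely many generators, which anticommute and square to zero. -/
lemma exists_F_eq_bot (h2 : (2 : k) ≠ 0) (hA : A.IsSuperCommutative)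
    (hfg : Algebra.FiniteType k A.carrier) : ∃ N, A.F N = ⊥ := by
  classical
  obtain ⟨S, hS⟩ := hfg.out
  set Y : Submodule k A.carrier := ∑ s ∈ S, Submodule.span k {A.po s} with hYdef
  have hYle : Y ≤ A.O := by
    rw [hYdef]
    refine Finset.sum_induction _ (fun Z => Z ≤ A.O) (fun a b ha hb => sup_le ha hb) bot_le ?_
    intro s _
    rw [Submodule.span_singleton_le_iff_mem]
    exact A.pe_po s
  have hmem : ∀ s ∈ S, A.po s ∈ Y := by
    intro s hs
    have : Submodule.span k {A.po s} ≤ Y :=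
      Finset.single_le_sum (f := fun s => Submodule.span k {A.po s}) (fun _ _ => bot_le) hs
    exact this (Submodule.mem_span_singleton_self _)
  have hc := commute_top_span hA hYle
  have hYnil : IsNilpotent Y := by
    apply Commute.isNilpotent_sum
    · intro s _
      refine ⟨2, ?_⟩
      rw [pow_two, Submodule.span_mul_span, Set.singleton_mul_singleton, odd_sq h2 hA (A.pe_po s)]
      simp
    · intro s t _ _
      change _ * _ = _ * _
      rw [Submodule.span_mul_span, Submodule.span_mul_span, Set.singleton_mul_singleton,
        Set.singleton_mul_singleton, hA.2 _ _ (A.pe_po s) (A.pe_po t), ← Set.neg_singleton,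
        Submodule.span_neg]
  have hO : ∀ a, A.po a ∈ ⊤ * Y := by
    intro a
    have ha : a ∈ Algebra.adjoin k (S : Set A.carrier) := by rw [hS]; trivial
    induction ha using Algebra.adjoin_induction with
    | mem x hx => simpa using Submodule.mul_mem_mul (Submodule.mem_top (x := (1 : A.carrier))) (hmem x hx)
    | algebraMap r =>
      rw [Algebra.algebraMap_eq_smul_one, map_smul, A.one_even, smul_zero]
      exact zero_mem _
    | add x y _ _ hx hy => rw [map_add]; exact add_mem hx hy
    | mul x y _ _ hx hy =>
      rw [po_mul]
      refine add_mem ?_ ?_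
      · rw [← top_mul_top, mul_assoc]
        exact Submodule.mul_mem_mul Submodule.mem_top hy
      · rw [← top_mul_top, mul_assoc, hc.eq, ← mul_assoc]
        exact Submodule.mul_mem_mul hx Submodule.mem_top
  have hOle : A.O ≤ ⊤ * Y := fun a ha => by
    rw [← A.pe_of_odd ha]
    exact hO a
  obtain ⟨N, hN⟩ := Commute.isNilpotent_mul_left hc hYnil
  refine ⟨N, le_bot_iff.mp ?_⟩
  have : A.O ^ N ≤ (⊤ * Y) ^ N := pow_le_pow_left' hOle N
  rw [hN] at this
  unfold F
  refine (mul_le_mul' le_rfl this).trans ?_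
  simp

section Frame

variable {ι : Type} [Fintype ι] [DecidableEq ι]

/-- A family of odd right superderivations `d i` of `A` which is, modulo the odd ideal, dual to a
family of odd elements `y i` generating the odd part over `A` modulo `F 2`. -/
structure IsFrame (A : HopfSuperalgebra k) (d : ι → A.carrier →ₗ[k] A.carrier)
    (y : ι → A.carrier) : Prop where
  leibniz : ∀ i a b, d i (a * b) = d i a * b + a * d i b - (2 : k) • (d i a * A.po b)
  odd_d : ∀ i a, d i (A.po a) = A.pe (d i a)
  odd_y : ∀ i, A.pe (y i) = 0
  dual : ∀ i j, d i (y j) - (if i = j then 1 else 0) ∈ A.F 1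
  gen : ∀ o, A.pe o = 0 → ∃ b : ι → A.carrier, o - ∑ i, b i * y i ∈ A.F 2

variable {d : ι → A.carrier →ₗ[k] A.carrier} {y : ι → A.carrier}

lemma IsFrame.leibniz_odd (h : IsFrame A d y) (i : ι) (a : A.carrier) {o : A.carrier}
    (ho : A.pe o = 0) : d i (a * o) = a * d i o - d i a * o := by
  rw [h.leibniz, A.pe_of_odd ho, two_smul]
  abel

/-- An odd derivation lowers the filtration by the odd ideal by at most one step. -/
lemma IsFrame.d_mem (h : IsFrame A d y) (hA : A.IsSuperCommutative) (i : ι) (n : ℕ)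
    {a : A.carrier} (ha : a ∈ A.F n) : d i a ∈ A.F (n - 1) := by
  induction n generalizing a with
  | zero => exact A.mem_F_zero _
  | succ n ih =>
    rw [F_succ] at ha
    induction ha using Submodule.mul_induction_on' with
    | mem_mul_mem a ha o ho =>
      rw [h.leibniz_odd i a ho]
      refine sub_mem (mul_mem_F_right hA _ ha) ?_
      exact A.F_anti (by omega) (mul_odd_mem_F (ih ha) ho)
    | add a _ b _ ha hb => rw [map_add]; exact add_mem ha hb

/-- The generators `y i` generate `F (m+1)` modulo `F (m+2)`. -/
lemma IsFrame.exists_coeff (h : IsFrame A d y) (hA : A.IsSuperCommutative) (m : ℕ)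
    {a : A.carrier} (ha : a ∈ A.F (m + 1)) :
    ∃ b : ι → A.carrier, (∀ i, b i ∈ A.F m) ∧ a - ∑ i, b i * y i ∈ A.F (m + 2) := by
  rw [F_succ] at ha
  induction ha using Submodule.mul_induction_on' with
  | mem_mul_mem a ha o ho =>
    obtain ⟨b, hb⟩ := h.gen o ho
    refine ⟨fun i => a * b i, fun i => mul_mem_F_right hA _ ha, ?_⟩
    have := mul_mem_F hA ha hb
    rw [mul_sub, Finset.mul_sum] at this
    simpa only [mul_assoc] using this
  | add a _ a' _ ha ha' =>
    obtain ⟨b, hb, hb'⟩ := ha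
    obtain ⟨c, hc, hc'⟩ := ha'
    refine ⟨b + c, fun i => add_mem (hb i) (hc i), ?_⟩
    have := add_mem hb' hc'
    simp only [Pi.add_apply, add_mul, Finset.sum_add_distrib]
    convert this using 1
    abel

/-- One step of the separation argument: the generators are eliminated one at a time, by
comparing `a` with its derivative `d i a`. -/
lemma IsFrame.mem_succ (h : IsFrame A d y) (h2 : (2 : k) ≠ 0) (hA : A.IsSuperCommutative) (m : ℕ)
    {a : A.carrier} (ha : a ∈ A.F (m + 1)) (hd : ∀ i, d i a ∈ A.F (m + 1)) :
    a ∈ A.F (m + 2) := by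
  have key : ∀ T : Finset ι, ∀ b : ι → A.carrier, (∀ i, b i ∈ A.F m) →
      a - ∑ i ∈ T, b i * y i ∈ A.F (m + 2) → a ∈ A.F (m + 2) := by
    intro T
    induction T using Finset.induction_on with
    | empty => intro b _ hb; simpa using hb
    | insert l T hl ih =>
      intro b hb hab
      rw [Finset.sum_insert hl] at hab
      refine ih (fun i => b i - d l (b i) * y l) (fun i => sub_mem (hb i) ?_) ?_
      · exact A.F_anti (by omega) (mul_odd_mem_F (h.d_mem hA l m (hb i)) (h.odd_y l))
      -- the derivative `d l` expresses `b l` through the remaining coefficients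
      have h1 : b l - d l (b l) * y l - ∑ i ∈ T, d l (b i) * y i ∈ A.F (m + 1) := by
        have e := h.d_mem hA l (m + 2) hab
        rw [map_sub, map_add, map_sum, h.leibniz_odd l _ (h.odd_y l)] at e
        simp only [h.leibniz_odd l _ (h.odd_y _)] at e
        rw [Finset.sum_sub_distrib] at e
        have e1 : b l * d l (y l) - b l ∈ A.F (m + 1) := by
          have := mul_mem_F hA (hb l) (h.dual l l)
          rwa [if_pos rfl, mul_sub, mul_one] at this
        have e2 : ∑ i ∈ T, b i * d l (y i) ∈ A.F (m + 1) := by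
          refine sum_mem fun i hi => ?_
          have := mul_mem_F hA (hb i) (h.dual l i)
          rwa [if_neg (fun e => hl (by rwa [e])), sub_zero] at this
        have e3 := sub_mem (sub_mem (hd l) e) (add_mem e1 e2)
        convert e3 using 1
        abel
      have h3 : b l * y l + ∑ i ∈ T, d l (b i) * y l * y i ∈ A.F (m + 2) := by
        have := mul_odd_mem_F h1 (h.odd_y l)
        rw [sub_mul, sub_mul, mul_assoc _ (y l), odd_sq h2 hA (h.odd_y l), mul_zero, sub_zero,
          Finset.sum_mul] at this
        convert this using 1
        rw [sub_eq_add_neg, ← Finset.sum_neg_distrib]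
        congr 1
        refine Finset.sum_congr rfl fun i _ => ?_
        rw [mul_assoc, mul_assoc, hA.2 _ _ (h.odd_y i) (h.odd_y l), mul_neg, neg_neg]
      have := add_mem hab h3
      convert this using 1
      simp only [sub_mul, Finset.sum_sub_distrib]
      abel
  obtain ⟨b, hb, hb'⟩ := h.exists_coeff hA m ha
  exact key _ b hb hb'

/-- The derivatives `d i` detect the order of vanishing of elements of the odd ideal. -/
lemma IsFrame.mem_of_d (h : IsFrame A d y) (h2 : (2 : k) ≠ 0) (hA : A.IsSuperCommutative) (n : ℕ)
    {a : A.carrier} (ha : a ∈ A.F 1) (hd : ∀ i, d i a ∈ A.F n) : a ∈ A.F (n + 1) := by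
  induction n with
  | zero => exact ha
  | succ n ih =>
    exact h.mem_succ h2 hA n (ih fun i => A.F_succ_le n (hd i)) hd

/-- An element of the odd ideal killed by all the superderivations `d i` vanishes. -/
lemma IsFrame.eq_zero (h : IsFrame A d y) (h2 : (2 : k) ≠ 0) (hA : A.IsSuperCommutative)
    (hnil : ∃ N, A.F N = ⊥) {a : A.carrier} (ha : a ∈ A.F 1) (hd : ∀ i, d i a = 0) : a = 0 := by
  obtain ⟨N, hN⟩ := hnil
  have := h.mem_of_d h2 hA N ha fun i => by rw [hd i]; exact zero_mem _
  have := A.F_succ_le N this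
  rwa [hN, Submodule.mem_bot] at this

/-- One step of the integration argument: if `d i x` agrees with `c i` modulo `F n` and the
anticommutators of the `d i` kill `x` modulo `F n`, then `x` can be corrected so that the
agreement holds modulo `F (n+1)`. -/
lemma IsFrame.exists_improve (h : IsFrame A d y) (h2 : (2 : k) ≠ 0) (hA : A.IsSuperCommutative)
    (c : ι → k) (n : ℕ) (hn : 1 ≤ n)
    (hcomm : ∀ x, A.pe x = 0 → (∀ i, d i x - c i • 1 ∈ A.F n) →
      ∀ i j, d i (d j x) + d j (d i x) ∈ A.F n)
    {x : A.carrier} (hx : A.pe x = 0) (hdx : ∀ i, d i x - c i • 1 ∈ A.F n) :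
    ∃ x', A.pe x' = 0 ∧ ∀ i, d i x' - c i • 1 ∈ A.F (n + 1) := by
  have d1 : ∀ i, d i 1 = 0 := by
    intro i
    have := h.leibniz i 1 1
    rw [A.one_even] at this
    simpa using this
  have key : ∀ T : Finset ι, ∃ x', A.pe x' = 0 ∧ (∀ i, d i x' - c i • 1 ∈ A.F n) ∧
      ∀ i ∈ T, d i x' - c i • 1 ∈ A.F (n + 1) := by
    intro T
    induction T using Finset.induction_on with
    | empty => exact ⟨x, hx, hdx, by simp⟩
    | insert l T hl ih =>
      obtain ⟨x, hx, hdx, hT⟩ := ih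
      set r := d l x - c l • 1 with hr
      have hreven : A.po r = 0 := by
        rw [hr, map_sub, map_smul, A.one_even, ← A.pe_of_odd hx, h.odd_d, A.po_pe]
        simp
      have hrn : r ∈ A.F n := hdx l
      have hdr : ∀ i, d i r = d i (d l x) := by
        intro i
        rw [hr, map_sub, map_smul, d1, smul_zero, sub_zero]
      have hD : ∀ i, d i (x - r * y l) - c i • 1 =
          d i x - c i • 1 - r * d i (y l) + d i r * y l := by
        intro i
        rw [map_sub, h.leibniz_odd i _ (h.odd_y l)]
        abel
      refine ⟨x - r * y l, ?_, ?_, ?_⟩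
      · rw [map_sub, hx, A.mul_even_odd _ _ hreven (h.odd_y l), sub_zero]
      · intro i
        rw [hD]
        refine add_mem (sub_mem (hdx i) (mul_mem_F_right hA _ hrn)) ?_
        exact A.F_anti (by omega) (mul_odd_mem_F (h.d_mem hA i n hrn) (h.odd_y l))
      · intro i hi
        rw [hD]
        have hcl := hcomm x hx hdx i l
        rcases Finset.mem_insert.mp hi with rfl | hi
        · refine add_mem ?_ (mul_odd_mem_F ?_ (h.odd_y i))
          · have := mul_mem_F hA hrn (h.dual i i)
            rw [if_pos rfl, mul_sub, mul_one] at this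
            rw [← hr, ← neg_sub]
            exact neg_mem this
          · rw [hdr]
            rw [← two_smul k] at hcl
            exact (Submodule.smul_mem_iff _ h2).mp hcl
        · refine add_mem (sub_mem (hT i hi) ?_) (mul_odd_mem_F ?_ (h.odd_y l))
          · have := mul_mem_F hA hrn (h.dual i l)
            rwa [if_neg (fun e => hl (by rwa [← e])), sub_zero] at this
          · rw [hdr]
            have h3 : d l (d i x) ∈ A.F n := by
              have := h.d_mem hA l (n + 1) (hT i hi)
              rwa [map_sub, map_smul, d1, smul_zero, sub_zero, Nat.add_one_sub_one] at this
            exact (Submodule.add_mem_iff_left _ h3).mp hcl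
  obtain ⟨x', h1, _, h3⟩ := key Finset.univ
  exact ⟨x', h1, fun i => h3 i (Finset.mem_univ i)⟩

/-- Integration of the constant system `d i x = c i`. -/
lemma IsFrame.exists_integral (h : IsFrame A d y) (h2 : (2 : k) ≠ 0) (hA : A.IsSuperCommutative)
    (hnil : ∃ N, A.F N = ⊥) (c : ι → k)
    (hcomm : ∀ n x, 1 ≤ n → A.pe x = 0 → (∀ i, d i x - c i • 1 ∈ A.F n) →
      ∀ i j, d i (d j x) + d j (d i x) ∈ A.F n)
    {x : A.carrier} (hx : A.pe x = 0) (hdx : ∀ i, d i x - c i • 1 ∈ A.F 1) :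
    ∃ x, A.pe x = 0 ∧ ∀ i, d i x = c i • 1 := by
  have key : ∀ n, ∃ x, A.pe x = 0 ∧ ∀ i, d i x - c i • 1 ∈ A.F (n + 1) := by
    intro n
    induction n with
    | zero => exact ⟨x, hx, hdx⟩
    | succ n ih =>
      obtain ⟨x, hx, hdx⟩ := ih
      exact h.exists_improve h2 hA c (n + 1) (by omega)
        (fun x => hcomm (n + 1) x (by omega)) hx hdx
  obtain ⟨N, hN⟩ := hnil
  obtain ⟨x, hx, hdx⟩ := key N
  refine ⟨x, hx, fun i => sub_eq_zero.mp ?_⟩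
  have := A.F_succ_le N (hdx i)
  rwa [hN, Submodule.mem_bot] at this

end Frame

end HopfSuperalgebra

/-! ### The frame attached to a Harish-Chandra pair -/

namespace HopfSuperalgebra

variable {k : Type} [Field k] (A : HopfSuperalgebra k) {B : Type} [Ring B] [Algebra k B]

lemma cv_cv_right (p q r : A.carrier →ₗ[k] B) (a : A.carrier) :
    A.cv p (A.cv q r) a = LinearMap.mul' k B
      (TensorProduct.map p (LinearMap.mul' k B ∘ₗ TensorProduct.map q r)
        (TensorProduct.map LinearMap.id A.comul (A.comul a))) := by
  rw [← LinearMap.comp_apply (TensorProduct.map _ _) (TensorProduct.map _ _),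
    ← TensorProduct.map_comp]
  rfl

lemma comp_cv {B' : Type} [Ring B'] [Algebra k B'] (h : B →ₗ[k] B')
    (hm : ∀ a b, h (a * b) = h a * h b) (p q : A.carrier →ₗ[k] B) :
    h ∘ₗ A.cv p q = A.cv (h ∘ₗ p) (h ∘ₗ q) := by
  have : h ∘ₗ LinearMap.mul' k B ∘ₗ TensorProduct.map p q =
      LinearMap.mul' k B' ∘ₗ TensorProduct.map (h ∘ₗ p) (h ∘ₗ q) := by
    ext x y
    simp [hm]
  ext a
  exact LinearMap.congr_fun this (A.comul a)

/-- `Σ S(a₍₁₎) (a₍₂₎)₁`, where the second factor is projected to its odd part. Modulo `F 2` this is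
the projection of the Hopf module `F 1 / F 2` onto its coinvariants. -/
def e : A.carrier →ₗ[k] A.carrier := A.cv A.antipode A.po

lemma cv_id_e : A.cv LinearMap.id A.e = A.po := by
  rw [e, ← cv_assoc, cv_id_antipode, sc_counit_cv]

variable {A}

lemma pe_e {a : A.carrier} (ha : A.pe a = 0) : A.pe (A.e a) = 0 := by
  change A.pe (LinearMap.mul' k _ (TensorProduct.map A.antipode A.po (A.comul a))) = 0
  rw [A.comul_odd a ha]
  generalize A.comul a = z
  induction z with
  | zero => simp
  | tmul x y =>
    simp only [map_add, TensorProduct.map_tmul, LinearMap.mul'_apply, po_po, po_pe, mul_zero,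
      add_zero]
    exact A.mul_even_odd _ _ (by rw [A.antipode_pe, A.po_pe]) (A.pe_po _)
  | add x y hx hy =>
    simp only [map_add] at *
    rw [add_add_add_comm, hx, hy, add_zero]

end HopfSuperalgebra

namespace BarPairData
open HopfSuperalgebra

variable {k : Type} [Field k] {A : HopfSuperalgebra k} {P : HCP k} (R : BarPairData A P)

lemma oddIdeal_eq : A.oddIdeal = A.F 1 := by
  apply le_antisymm
  · unfold oddIdeal
    rw [Submodule.span_le]
    rintro _ ⟨a, b, hb, rfl⟩
    exact mul_odd_mem_F (A.mem_F_zero a) hb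
  · rw [F_succ, Submodule.mul_le]
    intro a _ b hb
    exact Submodule.subset_span ⟨a, b, hb, rfl⟩

lemma π_eq_zero {a : A.carrier} : R.π a = 0 ↔ a ∈ A.F 1 := by
  rw [← oddIdeal_eq, ← R.π_ker, LinearMap.mem_ker]

lemma π_odd {a : A.carrier} (ha : A.pe a = 0) : R.π a = 0 :=
  R.π_eq_zero.mpr (A.O_le_F_one ha)

lemma π_po (a : A.carrier) : R.π (A.po a) = 0 := R.π_odd (A.pe_po a)

lemma π_pe (a : A.carrier) : R.π (A.pe a) = R.π a := by
  rw [pe_eq, map_sub, π_po, sub_zero]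

lemma ϖ_pe (a : A.carrier) : R.ϖ (A.pe a) = 0 := by
  have : A.pe a ∈ LinearMap.ker R.ϖ := by
    rw [R.ϖ_ker]
    exact Submodule.mem_sup_left (A.po_pe a)
  exact this

lemma ϖ_po (a : A.carrier) : R.ϖ (A.po a) = R.ϖ a := by
  conv_rhs => rw [← A.pe_add_po a, map_add, ϖ_pe, zero_add]

lemma ϖ_even {a : A.carrier} (ha : A.po a = 0) : R.ϖ a = 0 := by
  rw [← A.pe_of_even ha, ϖ_pe]

lemma ϖ_even_mul_odd {b c : A.carrier} (hb : A.po b = 0) (hc : A.pe c = 0) :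
    R.ϖ (b * c) = A.counit b • R.ϖ c := by
  have : (b - A.counit b • 1) * c ∈ LinearMap.ker R.ϖ := by
    rw [R.ϖ_ker]
    refine Submodule.mem_sup_right (Submodule.subset_span ⟨_, c, ?_, ?_, hc, rfl⟩)
    · rw [map_sub, hb, map_smul, A.one_even, smul_zero, sub_zero]
    · rw [map_sub, map_smul, A.counit_one, smul_eq_mul, mul_one, sub_self]
  rw [LinearMap.mem_ker, sub_mul, map_sub, sub_eq_zero] at this
  rw [this, smul_mul_assoc, one_mul, map_smul]

lemma ϖ_mul (hA : A.IsSuperCommutative) (a b : A.carrier) :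
    R.ϖ (a * b) = A.counit a • R.ϖ b + A.counit b • R.ϖ a := by
  rw [← R.ϖ_po (a * b), po_mul, map_add, R.ϖ_even_mul_odd (A.po_pe a) (A.pe_po b), counit_pe, ϖ_po,
    ← hA.1 (A.pe b) (A.po a) (A.po_pe b), R.ϖ_even_mul_odd (A.po_pe b) (A.pe_po a), counit_pe, ϖ_po]

/-- The functional on `A` induced by `u ∈ W*`. -/
def ofW (u : P.W →ₗ[k] k) : A.carrier →ₗ[k] k := u ∘ₗ R.ϖ

/-- The functional on `A` induced by `f ∈ C*`. -/
def ofC (f : P.C →ₗ[k] k) : A.carrier →ₗ[k] k := f ∘ₗ R.π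

lemma ofW_mul (hA : A.IsSuperCommutative) (u : P.W →ₗ[k] k) (a b : A.carrier) :
    R.ofW u (a * b) = R.ofW u a * A.counit b + A.counit a * R.ofW u b := by
  simp only [ofW, LinearMap.comp_apply, R.ϖ_mul hA, map_add, map_smul, smul_eq_mul]
  ring

lemma D_ofW_mul (hA : A.IsSuperCommutative) (u : P.W →ₗ[k] k) (a b : A.carrier) :
    A.D (R.ofW u) (a * b) = A.D (R.ofW u) a * b + a * A.D (R.ofW u) b -
      (2 : k) • (A.D (R.ofW u) a * A.po b) := by
  have : R.ofW u ∘ₗ A.po = R.ofW u := by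
    ext a
    simp [ofW, ϖ_po]
  have h := A.D_mul _ (R.ofW_mul hA u) a b
  rwa [this] at h

lemma D_ofW_po (u : P.W →ₗ[k] k) (a : A.carrier) :
    A.D (R.ofW u) (A.po a) = A.pe (A.D (R.ofW u) a) :=
  A.D_odd_po _ (fun a => by simp [ofW, ϖ_pe]) a

lemma D_ofC_bracket_mul (u v : P.W →ₗ[k] k) (a b : A.carrier) :
    A.D (R.ofC (P.bracket u v)) (a * b) =
      A.D (R.ofC (P.bracket u v)) a * b + a * A.D (R.ofC (P.bracket u v)) b := by
  have : R.ofC (P.bracket u v) ∘ₗ A.po = 0 := by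
    ext a
    simp [ofC, π_po]
  have h := A.D_mul (R.ofC (P.bracket u v)) (fun a b => by
    simp [ofC, R.π_mul, P.bracket_der, R.π_counit]) a b
  rwa [this, D_zero, LinearMap.zero_apply, zero_mul, smul_zero, sub_zero] at h

/-- The even operator attached to a bracket is a derivation of `A`, so it preserves the powers of
the odd ideal. -/
lemma D_ofC_bracket_mem (u v : P.W →ₗ[k] k) (n : ℕ) {a : A.carrier}
    (ha : a ∈ A.F n) : A.D (R.ofC (P.bracket u v)) a ∈ A.F n := by
  induction n generalizing a with
  | zero => exact A.mem_F_zero _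
  | succ n ih =>
    rw [F_succ] at ha
    induction ha using Submodule.mul_induction_on' with
    | mem_mul_mem a ha o ho =>
      rw [D_ofC_bracket_mul]
      refine add_mem (mul_odd_mem_F (ih ha) ho) (mul_odd_mem_F ha ?_)
      exact A.D_even_po _ (fun a => by simp [ofC, π_po]) o ho
    | add a _ b _ ha hb => rw [map_add]; exact add_mem ha hb

/-- `π` intertwines the antipodes, since both composites are convolution inverses of `π`. -/
lemma π_antipode (a : A.carrier) :
    R.π (A.antipode a) = HopfAlgebra.antipode k (R.π a) := by
  have h1 : A.cv (R.π ∘ₗ A.antipode) R.π = A.sc _ A.counit := by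
    have := A.comp_cv R.π R.π_mul A.antipode LinearMap.id
    rw [LinearMap.comp_id] at this
    rw [← this, cv_antipode_id]
    ext a
    simp [sc, Algebra.algebraMap_eq_smul_one, R.π_one]
  have h2 : A.cv R.π (HopfAlgebra.antipode k ∘ₗ R.π) = A.sc _ A.counit := by
    ext a
    have h3 : ∀ z, TensorProduct.map R.π (HopfAlgebra.antipode k ∘ₗ R.π) z =
        (HopfAlgebra.antipode k).lTensor P.C (TensorProduct.map R.π R.π z) := by
      intro z
      rw [LinearMap.lTensor, ← LinearMap.comp_apply, ← TensorProduct.map_comp, LinearMap.id_comp]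
    simp only [cv, LinearMap.comp_apply]
    rw [h3, ← R.π_comul, HopfAlgebra.mul_antipode_lTensor_comul_apply, R.π_counit]
    rfl
  have h3 : R.π ∘ₗ A.antipode = HopfAlgebra.antipode k ∘ₗ R.π := by
    rw [← A.cv_sc_counit (R.π ∘ₗ A.antipode), ← h2, ← cv_assoc, h1, sc_counit_cv]
  exact LinearMap.congr_fun h3 a

include R in
/-- The antipode is multiplicative modulo the odd ideal, because `π` takes it to the antipode of
the commutative Hopf algebra `C`. -/
lemma antipode_mul_sub_mem (a b : A.carrier) :
    A.antipode (a * b) - A.antipode a * A.antipode b ∈ A.F 1 := by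
  rw [← R.π_eq_zero, map_sub, R.π_mul, π_antipode, π_antipode, π_antipode, R.π_mul,
    HopfAlgebra.antipode_mul_antidistrib, mul_comm, sub_self]

include R in
lemma antipode_odd_mem {a : A.carrier} (ha : A.pe a = 0) : A.antipode a ∈ A.F 1 := by
  rw [← R.π_eq_zero, π_antipode, R.π_odd ha, map_zero]

include R in
lemma e_even_mem {a : A.carrier} (ha : A.po a = 0) : A.e a ∈ A.F 2 := by
  change LinearMap.mul' k _ (TensorProduct.map A.antipode A.po (A.comul a)) ∈ _
  rw [A.comul_even a ha]
  generalize A.comul a = z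
  induction z with
  | zero => simp
  | tmul x y =>
    simp only [map_add, TensorProduct.map_tmul, LinearMap.mul'_apply, po_po, po_pe, mul_zero,
      zero_add]
    exact mul_odd_mem_F (R.antipode_odd_mem (A.pe_po _)) (A.pe_po _)
  | add x y hx hy =>
    simp only [map_add] at *
    rw [add_add_add_comm]
    exact add_mem hx hy

include R in
/-- Modulo `F 2`, the projection `e` satisfies `e(bc) = ε(b) e(c)` for `b` even. -/
lemma e_mul_sub_mem (hA : A.IsSuperCommutative) {b : A.carrier} (hb : A.po b = 0) (c : A.carrier) :
    A.e (b * c) - A.counit b • A.e c ∈ A.F 2 := by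
  set M := LinearMap.mul' k A.carrier ∘ₗ TensorProduct.map A.antipode A.po with hM
  set N := LinearMap.mul' k A.carrier ∘ₗ TensorProduct.map A.antipode LinearMap.id with hN
  have hNb : N (A.comul b) = A.counit b • 1 := by
    rw [← Algebra.algebraMap_eq_smul_one]
    exact A.antipode_comul b
  -- the correction term in `Δ(bc)` has its first tensor factor in the odd ideal
  have h1 : ∀ z z', M (TensorProduct.map LinearMap.id A.po z *
      TensorProduct.map A.po LinearMap.id z') ∈ A.F 2 := by
    intro z z'
    induction z with
    | zero => simp
    | add x y hx hy => simp only [map_add, add_mul]; exact add_mem hx hy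
    | tmul p q =>
      induction z' with
      | zero => simp
      | add x y hx hy => simp only [map_add, mul_add]; exact add_mem hx hy
      | tmul r s =>
        simp only [hM, TensorProduct.map_tmul, LinearMap.id_apply,
          Algebra.TensorProduct.tmul_mul_tmul, LinearMap.comp_apply, LinearMap.mul'_apply]
        refine mul_odd_mem_F ?_ (A.pe_po _)
        rw [← R.π_eq_zero, π_antipode, R.π_mul, π_po, mul_zero, map_zero]
  have h2 : ∀ z z', M ((TensorProduct.map A.pe A.pe z + TensorProduct.map A.po A.po z) * z') -
      N (TensorProduct.map A.pe A.pe z + TensorProduct.map A.po A.po z) * M z' ∈ A.F 2 := by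
    intro z z'
    induction z with
    | zero => simp
    | add x y hx hy =>
      simp only [map_add, add_mul] at *
      convert add_mem hx hy using 1
      abel
    | tmul p q =>
      induction z' with
      | zero => simp
      | add x y hx hy =>
        simp only [map_add, mul_add] at *
        convert add_mem hx hy using 1
        abel
      | tmul r s =>
        have e1 : A.antipode (A.pe p * r) * A.po (A.pe q * s) -
            A.antipode (A.pe p) * A.pe q * (A.antipode r * A.po s) ∈ A.F 2 := by
          have : A.po (A.pe q * s) = A.pe q * A.po s := by simp [po_mul]
          rw [this, mul_assoc (A.antipode (A.pe p)), ← mul_assoc (A.pe q),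
            hA.1 (A.pe q) (A.antipode r) (A.po_pe q), mul_assoc (A.antipode r),
            ← mul_assoc (A.antipode (A.pe p)), ← sub_mul, ← mul_assoc]
          exact mul_odd_mem_F (mul_mem_F_right hA _ (R.antipode_mul_sub_mem _ _)) (A.pe_po s)
        have e2 : A.antipode (A.po p * r) * A.po (A.po q * s) ∈ A.F 2 := by
          refine mul_odd_mem_F ?_ (A.pe_po _)
          rw [← R.π_eq_zero, π_antipode, R.π_mul, π_po, zero_mul, map_zero]
        have e3 : A.antipode (A.po p) * A.po q * (A.antipode r * A.po s) ∈ A.F 2 :=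
          mul_mem_F_right hA _ (mul_odd_mem_F (R.antipode_odd_mem (A.pe_po _)) (A.pe_po _))
        simp only [hM, hN, map_add, TensorProduct.map_tmul, LinearMap.id_apply, add_mul,
          Algebra.TensorProduct.tmul_mul_tmul, LinearMap.comp_apply, LinearMap.mul'_apply]
        convert add_mem e1 (sub_mem e2 e3) using 1
        abel
  have h3 := h2 (A.comul b) (A.comul c)
  rw [← A.comul_even b hb, hNb, smul_mul_assoc, one_mul] at h3
  change M (A.comul (b * c)) - A.counit b • M (A.comul c) ∈ _
  rw [A.comul_mul, map_sub, map_smul, sub_right_comm]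
  exact sub_mem h3 (Submodule.smul_mem _ _ (h1 _ _))

include R in
/-- Modulo `F 2`, the projection `e` factors through `ϖ : A → W`. -/
lemma e_mem_of_ker (hA : A.IsSuperCommutative) {a : A.carrier} (ha : R.ϖ a = 0) :
    A.e a ∈ A.F 2 := by
  have h : LinearMap.ker R.ϖ ≤ (A.F 2).comap A.e := by
    rw [R.ϖ_ker]
    refine sup_le (fun a ha => R.e_even_mem ha) (Submodule.span_le.mpr ?_)
    rintro _ ⟨b, c, hb, hεb, -, rfl⟩
    have := R.e_mul_sub_mem hA hb c
    rwa [hεb, zero_smul, sub_zero] at this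
  exact h ha

/-- `D_u` maps the coinvariant lift `e a` to the constant `u(ϖ a)`, modulo the odd ideal. -/
lemma D_e_sub_mem (hA : A.IsSuperCommutative) (u : P.W →ₗ[k] k) (a : A.carrier) :
    A.D (R.ofW u) (A.e a) - u (R.ϖ a) • 1 ∈ A.F 1 := by
  have h1 : ∀ z, R.π (A.D (R.ofW u) (LinearMap.mul' k _ (TensorProduct.map A.antipode A.po z))) =
      LinearMap.mul' k _ (TensorProduct.map (R.π ∘ₗ A.antipode) (R.π ∘ₗ A.D (R.ofW u)) z) := by
    intro z
    induction z with
    | zero => simp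
    | add x y hx hy => simp only [map_add] at *; rw [hx, hy]
    | tmul x y =>
      simp only [TensorProduct.map_tmul, LinearMap.mul'_apply, LinearMap.comp_apply]
      rw [D_ofW_mul R hA]
      simp [R.π_mul, π_po, D_ofW_po, π_pe]
  have h2 : R.π (A.D (R.ofW u) (A.e a)) =
      A.cv (R.π ∘ₗ A.antipode) (R.π ∘ₗ A.D (R.ofW u)) a := h1 _
  have h3 : A.cv (R.π ∘ₗ A.antipode) R.π = A.sc _ A.counit := by
    have := A.comp_cv R.π R.π_mul A.antipode LinearMap.id
    rw [LinearMap.comp_id] at this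
    rw [← this, cv_antipode_id]
    ext a
    simp [sc, Algebra.algebraMap_eq_smul_one, R.π_one]
  rw [← R.π_eq_zero, map_sub, h2, comp_D, ← cv_assoc, h3, sc_counit_cv, map_smul, R.π_one]
  simp [sc, ofW, Algebra.algebraMap_eq_smul_one]

/-- Every Harish-Chandra realization yields a frame: a basis of `W` gives dual vector fields on
`A`, and the coinvariant lifts of the basis vectors give the odd generators. -/
lemma isFrame (hA : A.IsSuperCommutative) {ι : Type} [Fintype ι] [DecidableEq ι]
    (b : Module.Basis ι k P.W) :
    ∃ y, IsFrame A (fun i => A.D (R.ofW (b.coord i))) y := by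
  have hlift : ∀ i, ∃ a, A.pe a = 0 ∧ R.ϖ a = b i := by
    intro i
    obtain ⟨a, ha⟩ := R.ϖ_surj (b i)
    exact ⟨A.po a, A.pe_po a, by rw [ϖ_po, ha]⟩
  choose l hl hl' using hlift
  refine ⟨fun i => A.e (l i), fun i a c => R.D_ofW_mul hA _ a c, fun i a => R.D_ofW_po _ a,
    fun i => pe_e (hl i), fun i j => ?_, fun o ho => ?_⟩
  · have := R.D_e_sub_mem hA (b.coord i) (l j)
    rw [hl', Module.Basis.coord_apply, Module.Basis.repr_self, Finsupp.single_apply] at this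
    convert this using 2
    simp [eq_comm]
  · refine ⟨fun i => A.D (R.ofW (b.coord i)) o, ?_⟩
    have h1 : ∀ a, A.e a - ∑ i, R.ofW (b.coord i) a • A.e (l i) ∈ A.F 2 := by
      intro a
      have : R.ϖ (a - ∑ i, R.ofW (b.coord i) a • l i) = 0 := by
        rw [map_sub, map_sum]
        simp only [map_smul, hl']
        rw [sub_eq_zero]
        exact (b.sum_repr (R.ϖ a)).symm
      have := R.e_mem_of_ker hA this
      rwa [map_sub, map_sum, Finset.sum_congr rfl fun i _ => map_smul A.e _ _] at this
    have h2 : ∀ z, LinearMap.mul' k _ (TensorProduct.map LinearMap.id A.e z) -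
        ∑ i, A.slice (R.ofW (b.coord i)) z * A.e (l i) ∈ A.F 2 := by
      intro z
      induction z with
      | zero => simp
      | add x y hx hy =>
        simp only [map_add, add_mul, Finset.sum_add_distrib]
        convert add_mem hx hy using 1
        abel
      | tmul x y =>
        have := mul_mem_F_left hA x (h1 y)
        simpa [mul_sub, Finset.mul_sum] using this
    have h3 : LinearMap.mul' k _ (TensorProduct.map LinearMap.id A.e (A.comul o)) = o := by
      have := LinearMap.congr_fun A.cv_id_e o
      rwa [A.pe_of_odd ho] at this
    have := h2 (A.comul o)
    rwa [h3] at this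

end BarPairData

/-! ### Integration of a coinvariant -/

/-- The matrix coefficients of the comodule `W`: `κ_u(w) = Σ u(w₍₀₎) w₍₁₎ ∈ C`. -/
def HCP.coeff {k : Type} [Field k] (P : HCP k) (u : P.W →ₗ[k] k) : P.W →ₗ[k] P.C :=
  (TensorProduct.lid k P.C).toLinearMap ∘ₗ TensorProduct.map u LinearMap.id ∘ₗ P.coact

lemma HCP.coeff_of_trivial {k : Type} [Field k] (P : HCP k) (u : P.W →ₗ[k] k) {w : P.W}
    (hw : P.coact w = w ⊗ₜ[k] (1 : P.C)) : P.coeff u w = u w • 1 := by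
  simp [HCP.coeff, hw]

lemma HCP.bracket_one {k : Type} [Field k] (P : HCP k) (u v : P.W →ₗ[k] k) :
    P.bracket u v 1 = 0 := by
  have := P.bracket_der u v 1 1
  simpa using this

namespace BarPairData
open HopfSuperalgebra

variable {k : Type} [Field k] {A : HopfSuperalgebra k} {P : HCP k} (R : BarPairData A P)

/-- The compatibility of `ϖ` with the coactions, in terms of matrix coefficients. -/
lemma coeff_comp_ϖ (u : P.W →ₗ[k] k) :
    P.coeff u ∘ₗ R.ϖ = A.cv (R.π ∘ₗ A.antipode) (A.cv (A.sc _ (R.ofW u)) R.π) := by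
  ext a
  rw [cv_cv_right]
  simp only [HCP.coeff, LinearMap.comp_apply, R.ϖ_coact, adjCoact, LinearEquiv.coe_coe]
  generalize TensorProduct.map LinearMap.id A.comul (A.comul a) = z
  induction z with
  | zero => simp
  | add x y hx hy => simp only [map_add, hx, hy]
  | tmul p q =>
    induction q with
    | zero => simp
    | add x y hx hy => simp only [tmul_add, map_add, hx, hy]
    | tmul q r =>
      simp [sc, ofW, R.π_mul, Algebra.algebraMap_eq_smul_one]

lemma cv_π_coeff (u : P.W →ₗ[k] k) :
    A.cv R.π (P.coeff u ∘ₗ R.ϖ) = A.cv (A.sc _ (R.ofW u)) R.π := by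
  have h : A.cv R.π (R.π ∘ₗ A.antipode) = A.sc _ A.counit := by
    have := A.comp_cv R.π R.π_mul LinearMap.id A.antipode
    rw [LinearMap.comp_id] at this
    rw [← this, cv_id_antipode]
    ext a
    simp [sc, Algebra.algebraMap_eq_smul_one, R.π_one]
  rw [coeff_comp_ϖ, ← cv_assoc, h, sc_counit_cv]

variable {ι : Type} [Fintype ι] (b : Module.Basis ι k P.W)

lemma conv_ofW_ofC (u : P.W →ₗ[k] k) (f : P.C →ₗ[k] k) :
    A.conv (R.ofW u) (R.ofC f) =
      ∑ j, A.conv (R.ofC (f ∘ₗ LinearMap.mulRight k (P.coeff u (b j)))) (R.ofW (b.coord j)) := by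
  have h1 : A.conv (R.ofW u) (R.ofC f) = f ∘ₗ A.cv (A.sc _ (R.ofW u)) R.π := by
    have : LinearMap.mul' k k ∘ₗ TensorProduct.map (R.ofW u) (R.ofC f) =
        f ∘ₗ LinearMap.mul' k P.C ∘ₗ TensorProduct.map (A.sc _ (R.ofW u)) R.π := by
      ext x y
      simp [sc, ofC, Algebra.algebraMap_eq_smul_one]
    ext a
    exact LinearMap.congr_fun this (A.comul a)
  rw [h1, ← cv_π_coeff]
  have : f ∘ₗ LinearMap.mul' k P.C ∘ₗ TensorProduct.map R.π (P.coeff u ∘ₗ R.ϖ) =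
      ∑ j, LinearMap.mul' k k ∘ₗ TensorProduct.map
        (R.ofC (f ∘ₗ LinearMap.mulRight k (P.coeff u (b j)))) (R.ofW (b.coord j)) := by
    ext x y
    have hy : P.coeff u (R.ϖ y) = ∑ j, b.repr (R.ϖ y) j • P.coeff u (b j) := by
      conv_lhs => rw [← b.sum_repr (R.ϖ y), map_sum]
      simp only [map_smul]
    simp [ofC, ofW, hy, Finset.mul_sum, mul_comm]
  ext a
  have := LinearMap.congr_fun this (A.comul a)
  simp only [LinearMap.sum_apply] at this ⊢
  exact this

/-- Commutation of `D_u` past `D_f`: the comodule structure of `W` enters through its matrix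
coefficients `κ_u`. -/
lemma D_ofW_D_ofC (u : P.W →ₗ[k] k) (f : P.C →ₗ[k] k) (a : A.carrier) :
    A.D (R.ofW u) (A.D (R.ofC f) a) =
      ∑ j, A.D (R.ofC (f ∘ₗ LinearMap.mulRight k (P.coeff u (b j))))
        (A.D (R.ofW (b.coord j)) a) := by
  rw [D_D, R.conv_ofW_ofC b, D_sum, LinearMap.sum_apply]
  exact Finset.sum_congr rfl fun j _ => (A.D_D _ _ a).symm

/-- `Σ_j w_j κ_u(b_j) = u(w)·1` for a coinvariant `w`. -/
lemma sum_coord_coeff (u : P.W →ₗ[k] k) {w : P.W} (hw : P.coact w = w ⊗ₜ[k] (1 : P.C)) :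
    ∑ j, b.coord j w • P.coeff u (b j) = u w • 1 := by
  rw [← P.coeff_of_trivial u hw]
  conv_rhs => rw [← b.sum_repr w, map_sum]
  simp only [map_smul, Module.Basis.coord_apply]

lemma D_ofC_odd (f : P.C →ₗ[k] k) {a : A.carrier} (ha : A.pe a = 0) :
    A.pe (A.D (R.ofC f) a) = 0 :=
  A.D_even_po _ (fun a => by simp [ofC, π_po]) a ha

lemma ofC_one (f : P.C →ₗ[k] k) : R.ofC f 1 = f 1 := by simp [ofC, R.π_one]

/-- The integrability condition: the anticommutators of the odd vector fields, which are given by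
the bracket of the Harish-Chandra pair, kill approximate integrals of a coinvariant `w`. -/
lemma D_D_add_D_D_mem (h2 : (2 : k) ≠ 0) (hA : A.IsSuperCommutative) [DecidableEq ι]
    {w : P.W} (hw : P.coact w = w ⊗ₜ[k] (1 : P.C)) (n : ℕ) {x : A.carrier} (hx : A.pe x = 0)
    (hdx : ∀ i, A.D (R.ofW (b.coord i)) x - b.coord i w • 1 ∈ A.F n) (i j : ι) :
    A.D (R.ofW (b.coord i)) (A.D (R.ofW (b.coord j)) x) +
      A.D (R.ofW (b.coord j)) (A.D (R.ofW (b.coord i)) x) ∈ A.F n := by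
  obtain ⟨y, hy⟩ := R.isFrame hA b
  set g := P.bracket (b.coord i) (b.coord j) with hg
  have h1 : A.D (R.ofW (b.coord i)) (A.D (R.ofW (b.coord j)) x) +
      A.D (R.ofW (b.coord j)) (A.D (R.ofW (b.coord i)) x) = A.D (R.ofC g) x := by
    have : R.ofC g = _ := R.bracket_eq (b.coord i) (b.coord j)
    rw [this, D_add, LinearMap.add_apply, D_D, D_D]
    rfl
  rw [h1]
  refine A.F_succ_le n (hy.mem_of_d h2 hA n (A.O_le_F_one (R.D_ofC_odd g hx)) fun m => ?_)
  have h3 : ∀ c : P.C, R.ofC (g ∘ₗ LinearMap.mulRight k c) =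
      Coalgebra.counit (R := k) c • R.ofC g + g c • A.counit := by
    intro c
    ext a
    simp [ofC, hg, P.bracket_der, R.π_counit, mul_comm, add_comm]
  have h4 : ∑ l, g (P.coeff (b.coord m) (b l)) • b.coord l w = 0 := by
    have := congrArg g (sum_coord_coeff b (b.coord m) hw)
    rw [map_sum, map_smul, hg, P.bracket_one, smul_zero] at this
    rw [← this]
    exact Finset.sum_congr rfl fun l _ => by rw [map_smul, smul_eq_mul, smul_eq_mul, mul_comm]
  have h5 : A.D (R.ofW (b.coord m)) (A.D (R.ofC g) x) =
      ∑ l, (Coalgebra.counit (R := k) (P.coeff (b.coord m) (b l)) •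
          A.D (R.ofC g) (A.D (R.ofW (b.coord l)) x - b.coord l w • 1) +
        g (P.coeff (b.coord m) (b l)) • (A.D (R.ofW (b.coord l)) x - b.coord l w • 1)) := by
    have h6 : ∀ l, Coalgebra.counit (R := k) (P.coeff (b.coord m) (b l)) •
          A.D (R.ofC g) (A.D (R.ofW (b.coord l)) x - b.coord l w • 1) +
        g (P.coeff (b.coord m) (b l)) • (A.D (R.ofW (b.coord l)) x - b.coord l w • 1) =
        A.D (R.ofC (g ∘ₗ LinearMap.mulRight k (P.coeff (b.coord m) (b l))))
          (A.D (R.ofW (b.coord l)) x) -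
        (g (P.coeff (b.coord m) (b l)) • b.coord l w) • (1 : A.carrier) := by
      intro l
      rw [h3, D_add, D_smul, D_smul, D_counit, map_sub, map_smul, D_one, ofC_one, hg, P.bracket_one]
      simp [smul_sub, smul_smul, add_sub_assoc]
    rw [R.D_ofW_D_ofC b, Finset.sum_congr rfl fun l _ => h6 l, Finset.sum_sub_distrib,
      ← Finset.sum_smul, h4, zero_smul, sub_zero]
  rw [h5]
  exact sum_mem fun l _ => add_mem (Submodule.smul_mem _ _ (R.D_ofC_bracket_mem _ _ n (hdx l)))
    (Submodule.smul_mem _ _ (hdx l))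

/-- A coinvariant `w` extends to an odd function `x` on the supergroup with constant odd
derivatives `D_u x = u(w)`. -/
lemma exists_integral (h2 : (2 : k) ≠ 0) (hA : A.IsSuperCommutative)
    (hnil : ∃ N, A.F N = ⊥) [DecidableEq ι] {w : P.W} (hw : P.coact w = w ⊗ₜ[k] (1 : P.C)) :
    ∃ x, A.pe x = 0 ∧ ∀ i, A.D (R.ofW (b.coord i)) x = b.coord i w • 1 := by
  obtain ⟨y, hy⟩ := R.isFrame hA b
  obtain ⟨a, ha⟩ := R.ϖ_surj w
  refine hy.exists_integral h2 hA hnil (fun i => b.coord i w)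
    (fun n x _ hx hdx => R.D_D_add_D_D_mem b h2 hA hw n hx hdx)
    (x := A.e (A.po a)) (pe_e (A.pe_po a)) fun i => ?_
  have := R.D_e_sub_mem hA (b.coord i) (A.po a)
  rwa [ϖ_po, ha] at this

/-- The solution `x` of the constant system is invariant under the even part. -/
lemma D_ofC_eq (h2 : (2 : k) ≠ 0) (hA : A.IsSuperCommutative)
    (hnil : ∃ N, A.F N = ⊥) [DecidableEq ι] {w : P.W} (hw : P.coact w = w ⊗ₜ[k] (1 : P.C))
    {x : A.carrier} (hx : A.pe x = 0)
    (hdx : ∀ i, A.D (R.ofW (b.coord i)) x = b.coord i w • 1) (f : P.C →ₗ[k] k) :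
    A.D (R.ofC f) x = f 1 • x := by
  obtain ⟨y, hy⟩ := R.isFrame hA b
  refine sub_eq_zero.mp (hy.eq_zero h2 hA hnil ?_ fun m => ?_)
  · exact A.O_le_F_one (sub_mem (R.D_ofC_odd f hx) (Submodule.smul_mem _ _ (A.mem_O.mpr hx)))
  · have h1 := congrArg f (sum_coord_coeff b (b.coord m) hw)
    rw [map_sum] at h1
    rw [map_sub, R.D_ofW_D_ofC b, map_smul, hdx]
    simp only [hdx, map_smul, D_one, ofC_one, LinearMap.comp_apply, LinearMap.mulRight_apply,
      one_mul, smul_smul] at h1 ⊢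
    rw [← Finset.sum_smul, mul_comm (f 1), ← smul_eq_mul _ (f 1), ← h1]
    simp

end BarPairData

/-! ### Primitivity -/

/-- The slice `(φ ⊗ id) : M ⊗ N → N`. -/
def lsl {k M : Type} (N : Type) [Field k] [AddCommGroup M] [Module k M] [AddCommGroup N]
    [Module k N] (φ : M →ₗ[k] k) : M ⊗[k] N →ₗ[k] N :=
  (TensorProduct.lid k N).toLinearMap ∘ₗ TensorProduct.map φ LinearMap.id

@[simp] lemma lsl_tmul {k M N : Type} [Field k] [AddCommGroup M] [Module k M] [AddCommGroup N]
    [Module k N] (φ : M →ₗ[k] k) (m : M) (n : N) : lsl N φ (m ⊗ₜ n) = φ m • n := by simp [lsl]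

/-- Functionals on the first factor separate the elements of a tensor product. -/
lemma eq_zero_of_lsl {k M N : Type} [Field k] [AddCommGroup M] [Module k M] [AddCommGroup N]
    [Module k N] {z : M ⊗[k] N} (h : ∀ φ : M →ₗ[k] k, lsl N φ z = 0) : z = 0 := by
  classical
  let b := Module.Free.chooseBasis k M
  apply (TensorProduct.equivFinsuppOfBasisLeft b (N := N)).injective
  rw [map_zero]
  ext i
  rw [TensorProduct.equivFinsuppOfBasisLeft_apply]
  have := h (b.coord i)
  rw [lsl, LinearMap.comp_apply, LinearEquiv.coe_coe, LinearEquiv.map_eq_zero_iff] at this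
  simpa [LinearMap.rTensor] using this

namespace BarPairData
open HopfSuperalgebra

variable {k : Type} [Field k] {A : HopfSuperalgebra k} {P : HCP k} (R : BarPairData A P)

lemma D_lsl (φ ψ : A.carrier →ₗ[k] k) (z : A.carrier ⊗[k] A.carrier) :
    A.D φ (lsl _ ψ z) = lsl _ ψ (TensorProduct.map LinearMap.id (A.D φ) z) := by
  induction z with
  | zero => simp
  | add x y hx hy => simp only [map_add, hx, hy]
  | tmul x y => simp

/-- Left invariance of `D φ`. -/
lemma comul_D (φ : A.carrier →ₗ[k] k) (a : A.carrier) :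
    A.comul (A.D φ a) = TensorProduct.map LinearMap.id (A.D φ) (A.comul a) := by
  have h1 : ∀ z : A.carrier ⊗[k] A.carrier, TensorProduct.map LinearMap.id (A.D φ) z =
      TensorProduct.map LinearMap.id (A.slice φ) (TensorProduct.map LinearMap.id A.comul z) := by
    intro z
    rw [← LinearMap.comp_apply (TensorProduct.map _ _) (TensorProduct.map _ _),
      ← TensorProduct.map_comp]
    rfl
  have h2 : ∀ z : A.carrier ⊗[k] A.carrier, A.comul (A.slice φ z) =
      TensorProduct.map LinearMap.id (A.slice φ)
      (TensorProduct.assoc k A.carrier A.carrier A.carrier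
        (TensorProduct.map A.comul LinearMap.id z)) := by
    intro z
    induction z with
    | zero => simp
    | add x y hx hy => simp only [map_add, hx, hy]
    | tmul x y =>
      simp only [slice_tmul, map_smul, TensorProduct.map_tmul, LinearMap.id_apply]
      generalize A.comul x = t
      induction t with
      | zero => simp
      | add x y hx hy => simp only [smul_add, add_tmul, map_add, hx, hy]
      | tmul p q => simp
  rw [D_apply, h2, A.coassoc, ← h1]

/-- An odd element all of whose left invariant derivatives, even and odd, are the constants
expected of a primitive element is primitive. -/
lemma mem_primitives {ι : Type} [Fintype ι] [DecidableEq ι] (b : Module.Basis ι k P.W)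
    (h2 : (2 : k) ≠ 0) (hA : A.IsSuperCommutative)
    (hnil : ∃ N, A.F N = ⊥) {x : A.carrier} (hx : A.pe x = 0) (c : ι → k)
    (hdx : ∀ i, A.D (R.ofW (b.coord i)) x = c i • 1)
    (hf : ∀ f : P.C →ₗ[k] k, A.D (R.ofC f) x = f 1 • x) : x ∈ A.primitives := by
  obtain ⟨y, hy⟩ := R.isFrame hA b
  change (A.comul - _) x = 0
  refine eq_zero_of_lsl fun φ => ?_
  refine hy.eq_zero h2 hA hnil ?_ fun i => ?_
  · rw [← R.π_eq_zero, ← Module.forall_dual_apply_eq_zero_iff k]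
    intro f
    have h1 : ∀ z, f (R.π (lsl _ φ z)) = φ (A.slice (R.ofC f) z) := by
      intro z
      induction z with
      | zero => simp
      | add x y hx hy => simp only [map_add, hx, hy]
      | tmul x y => simp [ofC, mul_comm]
    change f _ = 0
    rw [h1]
    have h3 : A.slice (R.ofC f) (A.comul x) = f 1 • x := hf f
    have h4 : R.ofC f x = 0 := by simp [ofC, R.π_odd hx]
    simp [h3, h4, R.ofC_one]
  · rw [D_lsl]
    have h3 : TensorProduct.map LinearMap.id (A.D (R.ofW (b.coord i))) (A.comul x) =
        c i • (1 ⊗ₜ 1) := by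
      rw [← comul_D, hdx, map_smul, A.comul_one]
    have h4 : A.D (R.ofW (b.coord i)) 1 = 0 := by
      have := hy.leibniz i 1 1
      rw [A.one_even] at this
      simpa using this
    simp [h3, h4, hdx]

include R in
/-- A non-zero coinvariant of `W` yields a non-zero odd primitive. -/
theorem exists_odd_primitive (h2 : (2 : k) ≠ 0) (hA : A.IsSuperCommutative)
    (hfg : Algebra.FiniteType k A.carrier) {w : P.W} (hw0 : w ≠ 0)
    (hw : P.coact w = w ⊗ₜ[k] (1 : P.C)) :
    ∃ x : A.carrier, x ≠ 0 ∧ A.pe x = 0 ∧ x ∈ A.primitives := by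
  have := P.fdW
  have hnil := exists_F_eq_bot h2 hA hfg
  let b := Module.finBasis k P.W
  obtain ⟨x, hx, hdx⟩ := R.exists_integral b h2 hA hnil hw
  refine ⟨x, ?_, hx, R.mem_primitives b h2 hA hnil hx _ hdx
    (R.D_ofC_eq b h2 hA hnil hw hx hdx)⟩
  rintro rfl
  apply hw0
  rw [← b.forall_coord_eq_zero_iff]
  intro i
  have := congrArg A.counit (hdx i)
  simpa [A.counit_one] using this.symm

end BarPairData

/-! ### Simple subrepresentations of an isotypic sum -/

/-- Let `V` be a simple representation of a set `X` of operators. Any non-zero subrepresentation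
`E` of `M` contained in the sum of the images of the homomorphisms `V → M` contains a copy of `V`.
Representations of the set `X` are modules over the free algebra on `X`. -/
lemma exists_intertwiner {k X V M : Type} [Field k] [AddCommGroup V] [Module k V] [AddCommGroup M]
    [Module k M] [Nontrivial V] (α : X → Module.End k V) (β : X → Module.End k M)
    (hs : ∀ S : Submodule k V, (∀ x, ∀ v ∈ S, α x v ∈ S) → S = ⊥ ∨ S = ⊤)
    (E : Submodule k M) (hE : ∀ x, ∀ m ∈ E, β x m ∈ E) (hE0 : E ≠ ⊥)
    (hED : E ≤ Submodule.span k
      {m | ∃ φ : V →ₗ[k] M, (∀ x v, φ (α x v) = β x (φ v)) ∧ ∃ v, φ v = m}) :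
    ∃ ψ : V →ₗ[k] M, Function.Injective ψ ∧ (∀ x v, ψ (α x v) = β x (ψ v)) ∧ ∀ v, ψ v ∈ E := by
  let fV := FreeAlgebra.lift k α
  let fM := FreeAlgebra.lift k β
  let iV : Module (FreeAlgebra k X) V := Module.compHom V fV.toRingHom
  let iM : Module (FreeAlgebra k X) M := Module.compHom M fM.toRingHom
  have smulV : ∀ (r : FreeAlgebra k X) (v : V), r • v = fV r v := fun _ _ => rfl
  have smulM : ∀ (r : FreeAlgebra k X) (m : M), r • m = fM r m := fun _ _ => rfl
  have algV : ∀ (c : k) (v : V), algebraMap k (FreeAlgebra k X) c • v = c • v := by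
    intro c v
    rw [smulV, AlgHom.commutes]
    rfl
  have algM : ∀ (c : k) (m : M), algebraMap k (FreeAlgebra k X) c • m = c • m := by
    intro c m
    rw [smulM, AlgHom.commutes]
    rfl
  have ιV : ∀ x (v : V), FreeAlgebra.ι k x • v = α x v := by
    intro x v
    rw [smulV, FreeAlgebra.lift_ι_apply]
  have ιM : ∀ x (m : M), FreeAlgebra.ι k x • m = β x m := by
    intro x m
    rw [smulM, FreeAlgebra.lift_ι_apply]
  -- a submodule over the free algebra is the same as a stable subspace
  have stab : ∀ S : Submodule k M, (∀ x, ∀ m ∈ S, β x m ∈ S) →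
      ∀ (r : FreeAlgebra k X), ∀ m ∈ S, r • m ∈ S := by
    intro S hS r
    induction r using FreeAlgebra.induction with
    | grade0 c => intro m hm; rw [algM]; exact S.smul_mem c hm
    | grade1 x => intro m hm; rw [ιM]; exact hS x m hm
    | mul a b ha hb => intro m hm; rw [mul_smul]; exact ha _ (hb _ hm)
    | add a b ha hb => intro m hm; rw [add_smul]; exact add_mem (ha _ hm) (hb _ hm)
  have hom : ∀ φ : V →ₗ[k] M, (∀ x v, φ (α x v) = β x (φ v)) →
      ∀ (r : FreeAlgebra k X) v, φ (r • v) = r • φ v := by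
    intro φ hφ r
    induction r using FreeAlgebra.induction with
    | grade0 c => intro v; rw [algM, algV, map_smul]
    | grade1 x => intro v; rw [ιM, ιV, hφ]
    | mul a b ha hb => intro v; rw [mul_smul, mul_smul, ha, hb]
    | add a b ha hb => intro v; rw [add_smul, add_smul, map_add, ha, hb]
  let E' : Submodule (FreeAlgebra k X) M :=
    { E with smul_mem' := fun r m hm => stab E hE r m hm }
  have simpleV : IsSimpleModule (FreeAlgebra k X) V := by
    rw [isSimpleModule_iff]
    refine { eq_bot_or_eq_top := fun S => ?_ }
    let S' : Submodule k V :=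
      { S with smul_mem' := fun c v hv => algV c v ▸ S.smul_mem (algebraMap k _ c) hv }
    have := hs S' fun x v hv => ιV x v ▸ S.smul_mem (FreeAlgebra.ι k x) hv
    refine this.imp (fun h => ?_) (fun h => ?_)
    · ext v
      exact (SetLike.ext_iff.mp h v)
    · ext v
      exact (SetLike.ext_iff.mp h v)
  set I := isotypicComponent (FreeAlgebra k X) M V with hI
  have hEI : E' ≤ I := by
    let I' : Submodule k M :=
      { I with smul_mem' := fun c v hv => algM c v ▸ I.smul_mem (algebraMap k _ c) hv }
    have : E ≤ I' := by
      refine hED.trans (Submodule.span_le.mpr ?_)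
      rintro _ ⟨φ, hφ, v, rfl⟩
      let φ' : V →ₗ[FreeAlgebra k X] M := { φ with map_smul' := hom φ hφ }
      have : IsSimpleModule (FreeAlgebra k X) (⊤ : Submodule (FreeAlgebra k X) V) :=
        .congr Submodule.topEquiv
      have h1 := (⊤ : Submodule (FreeAlgebra k X) V).map_le_isotypicComponent φ'
      rw [(Submodule.topEquiv (R := FreeAlgebra k X) (M := V)).isotypicComponent_eq] at h1
      exact h1 ⟨v, trivial, rfl⟩
    exact this
  have ss : IsSemisimpleModule (FreeAlgebra k X) I := inferInstance
  have ss' : IsSemisimpleModule (FreeAlgebra k X) E' :=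
    .of_injective (Submodule.inclusion hEI) (Submodule.inclusion_injective hEI)
  have hE0' : E' ≠ ⊥ := fun h => hE0 (by
    ext m
    exact SetLike.ext_iff.mp h m)
  obtain ⟨S, hSE, hS⟩ := (IsSemisimpleModule.eq_bot_or_exists_simple_le E').resolve_left hE0'
  obtain ⟨eqv⟩ := isIsotypicOfType_submodule_iff.mp
    (IsIsotypicOfType.isotypicComponent (FreeAlgebra k X) M V) S (hSE.trans hEI)
  refine ⟨{ toFun := fun v => (eqv.symm v : M), map_add' := fun v w => by simp,
            map_smul' := fun c v => ?_ }, ?_, fun x v => ?_, fun v => ?_⟩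
  · rw [RingHom.id_apply, ← algV, map_smul, Submodule.coe_smul, algM]
  · exact Subtype.val_injective.comp eqv.symm.injective
  · change ((eqv.symm (α x v) : S) : M) = β x (eqv.symm v : S)
    rw [← ιV, map_smul, Submodule.coe_smul, ιM]
  · exact hSE (eqv.symm v).2

/-! ### Coinvariants of comodules over an irreducible Hopf algebra -/

/-- The slice `(id ⊗ φ) : M ⊗ N → M`. -/
def rsl {k N : Type} (M : Type) [Field k] [AddCommGroup M] [Module k M] [AddCommGroup N]
    [Module k N] (φ : N →ₗ[k] k) : M ⊗[k] N →ₗ[k] M :=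
  (TensorProduct.rid k M).toLinearMap ∘ₗ TensorProduct.map LinearMap.id φ

@[simp] lemma rsl_tmul {k M N : Type} [Field k] [AddCommGroup M] [Module k M] [AddCommGroup N]
    [Module k N] (φ : N →ₗ[k] k) (m : M) (n : N) : rsl M φ (m ⊗ₜ n) = φ n • m := by simp [rsl]

section Slices

variable {k M N N' : Type} [Field k] [AddCommGroup M] [Module k M] [AddCommGroup N] [Module k N]
  [AddCommGroup N'] [Module k N']

lemma eq_zero_of_rsl {z : M ⊗[k] N} (h : ∀ φ : N →ₗ[k] k, rsl M φ z = 0) : z = 0 := by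
  apply (TensorProduct.comm k M N).injective
  rw [map_zero]
  refine eq_zero_of_lsl fun φ => ?_
  rw [← h φ]
  clear h
  induction z with
  | zero => simp
  | add x y hx hy => simp only [map_add, hx, hy]
  | tmul x y => simp

lemma lsl_map_right (φ : M →ₗ[k] k) (p : N →ₗ[k] N') (z : M ⊗[k] N) :
    lsl N' φ (TensorProduct.map LinearMap.id p z) = p (lsl N φ z) := by
  induction z with
  | zero => simp
  | add x y hx hy => simp only [map_add, hx, hy]
  | tmul x y => simp

lemma rsl_map_left (φ : M →ₗ[k] k) (p : N →ₗ[k] N') (z : N ⊗[k] M) :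
    rsl N' φ (TensorProduct.map p LinearMap.id z) = p (rsl N φ z) := by
  induction z with
  | zero => simp
  | add x y hx hy => simp only [map_add, hx, hy]
  | tmul x y => simp

lemma lsl_rsl (φ : M →ₗ[k] k) (ψ : N →ₗ[k] k) (z : M ⊗[k] N) :
    ψ (lsl N φ z) = φ (rsl M ψ z) := by
  induction z with
  | zero => simp
  | add x y hx hy => simp only [map_add, hx, hy]
  | tmul x y => simp [mul_comm]

/-- A tensor all of whose slices lie in `D` lies in `D ⊗ D`. -/
lemma mem_range_of_slices (D : Submodule k M) {z : M ⊗[k] M}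
    (hl : ∀ φ : M →ₗ[k] k, lsl M φ z ∈ D) (hr : ∀ φ : M →ₗ[k] k, rsl M φ z ∈ D) :
    z ∈ LinearMap.range (TensorProduct.map D.subtype D.subtype) := by
  obtain ⟨g, hg⟩ := LinearMap.exists_leftInverse_of_injective D.subtype
    (by rw [Submodule.ker_subtype])
  have hp : ∀ d ∈ D, (D.subtype ∘ₗ g) d = d := fun d hd => by
    have := LinearMap.congr_fun hg ⟨d, hd⟩
    exact congrArg Subtype.val this
  have h1 : TensorProduct.map LinearMap.id (D.subtype ∘ₗ g) z = z := by
    refine sub_eq_zero.mp (eq_zero_of_lsl fun φ => ?_)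
    rw [map_sub, lsl_map_right, hp _ (hl φ), sub_self]
  have h2 : TensorProduct.map (D.subtype ∘ₗ g) LinearMap.id z = z := by
    refine sub_eq_zero.mp (eq_zero_of_rsl fun φ => ?_)
    rw [map_sub, rsl_map_left, hp _ (hr φ), sub_self]
  refine ⟨TensorProduct.map g g z, ?_⟩
  rw [← LinearMap.comp_apply, ← TensorProduct.map_comp]
  conv_rhs => rw [← h2, ← h1]
  rw [← LinearMap.comp_apply (TensorProduct.map _ _) (TensorProduct.map _ _),
    ← TensorProduct.map_comp, LinearMap.comp_id, LinearMap.id_comp]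

lemma lsl_mem_of_range (D : Submodule k M) {z : M ⊗[k] M}
    (hz : z ∈ LinearMap.range (TensorProduct.map D.subtype D.subtype)) (φ : M →ₗ[k] k) :
    lsl M φ z ∈ D := by
  obtain ⟨z, rfl⟩ := hz
  induction z with
  | zero => simp
  | add x y hx hy => simp only [map_add]; exact add_mem hx hy
  | tmul x y => simpa using D.smul_mem _ y.2

lemma rsl_mem_of_range (D : Submodule k M) {z : M ⊗[k] M}
    (hz : z ∈ LinearMap.range (TensorProduct.map D.subtype D.subtype)) (φ : M →ₗ[k] k) :
    rsl M φ z ∈ D := by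
  obtain ⟨z, rfl⟩ := hz
  induction z with
  | zero => simp
  | add x y hx hy => simp only [map_add]; exact add_mem hx hy
  | tmul x y => simpa using D.smul_mem _ x.2

end Slices

namespace HCP

variable {k : Type} [Field k] (P : HCP k)

/-- The action of `C*` on the comodule `W`. -/
def act (f : P.C →ₗ[k] k) : P.W →ₗ[k] P.W := rsl P.W f ∘ₗ P.coact

/-- The action of `C*` on the right comodule `C`. -/
def actC (f : P.C →ₗ[k] k) : P.C →ₗ[k] P.C := rsl P.C f ∘ₗ Coalgebra.comul

lemma apply_act (u : P.W →ₗ[k] k) (f : P.C →ₗ[k] k) (w : P.W) :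
    u (P.act f w) = f (P.coeff u w) := (lsl_rsl u f (P.coact w)).symm

lemma counit_coeff (u : P.W →ₗ[k] k) (w : P.W) :
    Coalgebra.counit (R := k) (P.coeff u w) = u w := by
  rw [← P.apply_act]
  exact congrArg u (P.coact_counit w)

lemma comul_coeff (u : P.W →ₗ[k] k) (w : P.W) :
    Coalgebra.comul (R := k) (P.coeff u w) =
      TensorProduct.map (P.coeff u) LinearMap.id (P.coact w) := by
  have h1 : Coalgebra.comul (R := k) (P.coeff u w) =
      lsl _ u (TensorProduct.map LinearMap.id (Coalgebra.comul (R := k)) (P.coact w)) :=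
    (lsl_map_right _ _ _).symm
  rw [h1, ← P.coact_coassoc]
  generalize P.coact w = z
  induction z with
  | zero => simp
  | add x y hx hy => simp only [map_add, hx, hy]
  | tmul x y =>
    simp only [coeff, TensorProduct.map_tmul, LinearMap.comp_apply, LinearMap.id_apply]
    generalize P.coact x = t
    induction t with
    | zero => simp
    | add x y hx hy => simp only [map_add, add_tmul, hx, hy]
    | tmul p q => simp [smul_tmul']

/-- The matrix coefficient maps `W → C` are homomorphisms of comodules. -/
lemma actC_coeff (f : P.C →ₗ[k] k) (u : P.W →ₗ[k] k) (w : P.W) :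
    P.actC f (P.coeff u w) = P.coeff u (P.act f w) := by
  rw [actC, LinearMap.comp_apply, comul_coeff, rsl_map_left]
  rfl

lemma lsl_comul_coeff (f : P.C →ₗ[k] k) (u : P.W →ₗ[k] k) (w : P.W) :
    lsl _ f (Coalgebra.comul (R := k) (P.coeff u w)) = P.coeff (f ∘ₗ P.coeff u) w := by
  rw [comul_coeff]
  change _ = lsl _ _ (P.coact w)
  generalize P.coact w = z
  induction z with
  | zero => simp
  | add x y hx hy => simp only [map_add, hx, hy]
  | tmul x y => simp

/-- If `C` is irreducible then any non-zero finite-dimensional comodule has a non-zero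
coinvariant. The coefficient space of a simple subcomodule is a simple subcoalgebra, hence `k·1`. -/
lemma exists_trivial
    (hC : coradicalOf (Coalgebra.comul (R := k) (A := P.C)) = Submodule.span k {(1 : P.C)})
    (hW : ∃ w : P.W, w ≠ 0) : ∃ w : P.W, w ≠ 0 ∧ P.coact w = w ⊗ₜ[k] (1 : P.C) := by
  have := P.fdW
  -- a simple subcomodule
  obtain ⟨N, ⟨hN, hN0⟩, hNmin⟩ := IsArtinian.set_has_minimal
    {S : Submodule k P.W | (∀ f, ∀ w ∈ S, P.act f w ∈ S) ∧ S ≠ ⊥}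
    ⟨⊤, fun _ _ _ => trivial, by
      obtain ⟨w, hw⟩ := hW
      exact fun h => hw ((Submodule.mem_bot k).mp (h ▸ Submodule.mem_top))⟩
  set D := Submodule.span k {c | ∃ u : P.W →ₗ[k] k, ∃ w ∈ N, P.coeff u w = c} with hD
  have hDmem : ∀ u, ∀ w ∈ N, P.coeff u w ∈ D := fun u w hw =>
    Submodule.subset_span ⟨u, w, hw, rfl⟩
  obtain ⟨n, hn, hn0⟩ := Submodule.exists_mem_ne_zero_of_ne_bot hN0
  have hNn : Nontrivial N := ⟨⟨⟨n, hn⟩, 0, fun h => hn0 (congrArg Subtype.val h)⟩⟩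
  have hDsub : IsSubcoalgebraOf (Coalgebra.comul (R := k)) D := by
    have hl : ∀ φ, ∀ d ∈ D, lsl _ φ (Coalgebra.comul (R := k) d) ∈ D := by
      intro φ
      change D ≤ D.comap (lsl _ φ ∘ₗ Coalgebra.comul)
      conv_lhs => rw [hD]
      rw [Submodule.span_le]
      rintro _ ⟨u, w, hw, rfl⟩
      change lsl _ _ _ ∈ D
      rw [lsl_comul_coeff]
      exact hDmem _ _ hw
    have hr : ∀ φ, ∀ d ∈ D, rsl _ φ (Coalgebra.comul (R := k) d) ∈ D := by
      intro φ
      change D ≤ D.comap (P.actC φ)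
      conv_lhs => rw [hD]
      rw [Submodule.span_le]
      rintro _ ⟨u, w, hw, rfl⟩
      change P.actC φ _ ∈ D
      rw [actC_coeff]
      exact hDmem _ _ (hN _ _ hw)
    exact fun d hd => mem_range_of_slices D (fun φ => hl φ d hd) (fun φ => hr φ d hd)
  have hD0 : D ≠ ⊥ := by
    intro h
    apply hn0
    rw [← Module.forall_dual_apply_eq_zero_iff k]
    intro u
    have h1 := hDmem u n hn
    rw [h, Submodule.mem_bot] at h1
    have h2 := P.counit_coeff u n
    rwa [h1, map_zero, eq_comm] at h2
  have hDmin : ∀ E : Submodule k P.C, E ≤ D → IsSubcoalgebraOf (Coalgebra.comul (R := k)) E →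
      E = ⊥ ∨ E = D := by
    intro E hED hE
    refine or_iff_not_imp_left.mpr fun hE0 => le_antisymm hED ?_
    obtain ⟨ψ, hψ, hψ', hψE⟩ := exists_intertwiner (V := N) (M := P.C)
      (fun f : P.C →ₗ[k] k => (P.act f).restrict (hN f)) P.actC
      (fun S hS => by
        by_contra! hcon
        have h1 : ∀ f, ∀ w ∈ S.map N.subtype, P.act f w ∈ S.map N.subtype := by
          rintro f _ ⟨w, hw, rfl⟩
          exact ⟨_, hS f w hw, rfl⟩
        have h2 : S.map N.subtype ≠ ⊥ := fun h => hcon.1 <| by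
          exact Submodule.map_injective_of_injective N.subtype_injective
            (by rw [h, Submodule.map_bot])
        refine hNmin _ ⟨h1, h2⟩ (lt_of_le_of_ne (Submodule.map_subtype_le N S) fun h => hcon.2 ?_)
        apply Submodule.map_injective_of_injective N.subtype_injective
        rw [h, Submodule.map_subtype_top])
      E (fun f c hc => rsl_mem_of_range E (hE c hc) f) hE0
      (hED.trans (Submodule.span_mono (by
        rintro _ ⟨u, w, hw, rfl⟩
        exact ⟨P.coeff u ∘ₗ N.subtype, fun f v => (P.actC_coeff f u v).symm, ⟨w, hw⟩, rfl⟩)))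
    rw [hD, Submodule.span_le]
    rintro _ ⟨u, w, hw, rfl⟩
    obtain ⟨g, hg⟩ := LinearMap.exists_leftInverse_of_injective ψ (LinearMap.ker_eq_bot.mpr hψ)
    have hg' : ∀ v, g (ψ v) = v := LinearMap.congr_fun hg
    -- `κ_u(w) = Σ v(ψ(w)₍₁₎) ψ(w)₍₂₎` for any extension `v` of `u ∘ ψ⁻¹` to `C`
    have key : P.coeff u w =
        lsl _ (u ∘ₗ N.subtype ∘ₗ g) (Coalgebra.comul (R := k) (ψ ⟨w, hw⟩)) := by
      rw [← sub_eq_zero, ← Module.forall_dual_apply_eq_zero_iff k]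
      intro f
      rw [map_sub, sub_eq_zero, lsl_rsl, ← apply_act]
      change _ = u (g (P.actC f _))
      rw [← hψ', hg']
      rfl
    rw [SetLike.mem_coe, key]
    exact lsl_mem_of_range E (hE _ (hψE _)) _
  have hDle : D ≤ Submodule.span k {(1 : P.C)} := by
    rw [← hC]
    exact le_sSup ⟨hDsub, hD0, hDmin⟩
  refine ⟨n, hn0, sub_eq_zero.mp (eq_zero_of_lsl fun u => ?_)⟩
  obtain ⟨c, hc⟩ := Submodule.mem_span_singleton.mp (hDle (hDmem u n hn))
  have h1 := P.counit_coeff u n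
  rw [← hc, map_smul, Bialgebra.counit_one, smul_eq_mul, mul_one] at h1
  rw [map_sub, lsl_tmul, ← h1, hc]
  exact sub_self _

end HCP

/-- Proposition 6.1: let `(C,W)` be a Harish-Chandra pair
and `A = A(C,W)` (characterized here by `(Ā, W^A) ≅ (C,W)`).  If some non-zero
`w ∈ W` is coacted on trivially by `C`, then `A` contains a non-zero odd
primitive.  In particular, if `C` is irreducible and `W ≠ 0`, then `A`
contains a non-zero odd primitive. -/
theorem odd_primitive_of_trivial_coinvariant
    (k : Type) [Field k] (hchar : ringChar k ≠ 2)
    (P : HCP k) (A : HopfSuperalgebra k)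
    (hA : A.IsSuperCommutative) (hfg : Algebra.FiniteType k A.carrier)
    (hreal : RealizesBarPair A P) :
    ((∃ w : P.W, w ≠ 0 ∧ P.coact w = w ⊗ₜ[k] (1 : P.C)) →
      ∃ x : A.carrier, x ≠ 0 ∧ A.pe x = 0 ∧ x ∈ A.primitives) ∧
    ((coradicalOf (Coalgebra.comul (R := k) (A := P.C)) =
        Submodule.span k {(1 : P.C)}) →
      (∃ w : P.W, w ≠ 0) →
      ∃ x : A.carrier, x ≠ 0 ∧ A.pe x = 0 ∧ x ∈ A.primitives) := by
  have h2 : (2 : k) ≠ 0 := Ring.two_ne_zero hchar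
  obtain ⟨R⟩ := hreal
  have main : (∃ w : P.W, w ≠ 0 ∧ P.coact w = w ⊗ₜ[k] (1 : P.C)) →
      ∃ x : A.carrier, x ≠ 0 ∧ A.pe x = 0 ∧ x ∈ A.primitives :=
    fun ⟨w, hw0, hw⟩ => R.exists_odd_primitive h2 hA hfg hw0 hw
  exact ⟨main, fun hC hW => main (P.exists_trivial hC hW)⟩

end
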